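/- Let G be a finitely generated co-Hopfian virtually free group. Then every class-permuting group endomorphism of G is an automorphism of G (bijective). -/

import Mathlib

open FirstOrder Language

/-- Function symbols of the first-order language of groups:
a binary multiplication, a unary inverse and a constant for the identity. -/
inductive GroupFunc : ℕ → Type
  | mul : GroupFunc 2
  | inv : GroupFunc 1
  | one : GroupFunc 0

/-- The first-order language of groups. -/
def groupLang : FirstOrder.Language :=
  { Functions := GroupFunc
    Relations := fun _ => Empty }

/-- Every group is a structure for the language of groups in the natural way. -/
instance groupLangStructure (G : Type*) [Group G] : groupLang.Structure G where
  funMap {n} f v :=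
    match f with
    | .mul => v 0 * v 1
    | .inv => (v 0)⁻¹
    | .one => 1
  RelMap {n} r _ := r.elim

/-- Existential formulas: iterated existential quantifications of a
quantifier-free formula. -/
inductive IsExistentialQF {α : Type*} : ∀ {n : ℕ}, groupLang.BoundedFormula α n → Prop
  | of_isQF {n : ℕ} {φ : groupLang.BoundedFormula α n} (h : φ.IsQF) : IsExistentialQF φ
  | ex {n : ℕ} {φ : groupLang.BoundedFormula α (n + 1)} (h : IsExistentialQF φ) :
      IsExistentialQF φ.ex

/-- Universal formulas: iterated universal quantifications of a
quantifier-free formula. -/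
inductive IsUniversalQF {α : Type*} : ∀ {n : ℕ}, groupLang.BoundedFormula α n → Prop
  | of_isQF {n : ℕ} {φ : groupLang.BoundedFormula α n} (h : φ.IsQF) : IsUniversalQF φ
  | all {n : ℕ} {φ : groupLang.BoundedFormula α (n + 1)} (h : IsUniversalQF φ) :
      IsUniversalQF φ.all

/-- ∀∃-formulas: iterated universal quantifications of an existential formula. -/
inductive IsAE {α : Type*} : ∀ {n : ℕ}, groupLang.BoundedFormula α n → Prop
  | of_existential {n : ℕ} {φ : groupLang.BoundedFormula α n} (h : IsExistentialQF φ) : IsAE φ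
  | all {n : ℕ} {φ : groupLang.BoundedFormula α (n + 1)} (h : IsAE φ) : IsAE φ.all

/-- A group is virtually free if it has a free subgroup of finite index. -/
def VirtuallyFree (G : Type*) [Group G] : Prop :=
  ∃ H : Subgroup G, H.FiniteIndex ∧ Nonempty (IsFreeGroup H)

/-- A group is co-Hopfian if every injective endomorphism is surjective. -/
def CoHopfian (G : Type*) [Group G] : Prop :=
  ∀ φ : G →* G, Function.Injective φ → Function.Surjective φ

/-- Two homomorphisms `φ, φ' : G → G'` are equivalent if they coincide up to
conjugation on every finite subgroup of `G`. -/
def HomEquiv {G G' : Type*} [Group G] [Group G'] (φ φ' : G →* G') : Prop :=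
  ∀ H : Subgroup G, (H : Set G).Finite →
    ∃ g' : G', ∀ h ∈ H, φ' h = g' * φ h * g'⁻¹

/-- Two groups are ∀∃-equivalent if they satisfy the same ∀∃-sentences. -/
def AEEquivalent (G : Type*) (G' : Type*) [Group G] [Group G'] : Prop :=
  ∀ φ : groupLang.Sentence, IsAE φ → (G ⊨ φ ↔ G' ⊨ φ)

/-- Two groups are ∃-equivalent if they satisfy the same existential sentences. -/
def ExistentiallyEquivalent (G : Type*) (G' : Type*) [Group G] [Group G'] : Prop :=
  ∀ φ : groupLang.Sentence, IsExistentialQF φ → (G ⊨ φ ↔ G' ⊨ φ)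

/-- An endomorphism is rigid-testing: `G` is rigid if every endomorphism
equivalent to the identity is an automorphism. -/
def Rigid (G : Type*) [Group G] : Prop :=
  ∀ φ : G →* G, HomEquiv φ (MonoidHom.id G) → Function.Bijective φ

/-- `Out G` is finite, expressed as: the inner automorphisms form a finite index
subgroup of `Aut G`. -/
def OutFinite (G : Type*) [Group G] : Prop :=
  (MulAut.conj : G →* MulAut G).range.FiniteIndex

/-- Iterated composition of an endomorphism. -/
def homPow {G : Type*} [Group G] (φ : G →* G) : ℕ → (G →* G)
  | 0 => MonoidHom.id G
  | n + 1 => φ.comp (homPow φ n)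

/-- An endomorphism `φ` of `G` is class-permuting if some positive power of `φ`
is equivalent to the identity of `G`. -/
def ClassPermuting {G : Type*} [Group G] (φ : G →* G) : Prop :=
  ∃ n : ℕ, 1 ≤ n ∧ HomEquiv (homPow φ n) (MonoidHom.id G)

/-- A maximal finite subgroup: a finite subgroup maximal with respect to
inclusion among finite subgroups. -/
def MaximalFiniteSubgroup {G : Type*} [Group G] (A : Subgroup G) : Prop :=
  (A : Set G).Finite ∧ ∀ B : Subgroup G, (B : Set G).Finite → A ≤ B → A = B

/-- Two subgroups are conjugate. -/
def SubgroupConj {G : Type*} [Group G] (A B : Subgroup G) : Prop :=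
  ∃ g : G, B = A.map (MulAut.conj g).toMonoidHom

/-- A group is strongly co-Hopfian if there is a finite subset `F` of
`G \ {1}` such that every endomorphism whose kernel misses `F` is an
automorphism. -/
def StronglyCoHopfian (G : Type*) [Group G] : Prop :=
  ∃ F : Finset G, (1 : G) ∉ F ∧
    ∀ φ : G →* G, (∀ f ∈ F, φ f ≠ 1) → Function.Bijective φ

/-- A group is finitely presented. -/
def GroupFinitelyPresented (G : Type*) [Group G] : Prop :=
  ∃ (n : ℕ) (rels : Finset (FreeGroup (Fin n))),
    Nonempty (PresentedGroup (rels : Set (FreeGroup (Fin n))) ≃* G)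

/-!
Replacing the endomorphism by a power, we may assume that it is a map `ψ` equivalent to the
identity, and it suffices to show that `ψ` is surjective: finitely generated virtually free groups
are residually finite, hence Hopfian.

The group `G` acts on a tree with finite vertex stabilizers and finitely many orbits of edges,
namely the tree dual to a nested family of optimal almost invariant subsets of `G`. Each element
of infinite order has its two ends separated by a member of this family, so it fixes no vertex.

If an element normalizing the stabilizer of an edge translated one of the half-trees of that edge
strictly into itself, then twisting the identity of `G` along the orbit of the edge by a power of
this element centralizing the edge stabilizer would give an injective endomorphism that is not
surjective. Co-Hopficity therefore provides a centre in the tree for the normalizer of each edge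
stabilizer. On each vertex stabilizer `ψ` is a conjugation, which gives a `ψ`-twisted equivariant
map `γ : V → G`. Descending induction on the order of the stabilizer of an edge shows that `γ`
takes values in the same coset of `ψ(G)` at the two ends of the edge; hence all its values lie in
one coset, and `ψ` is onto.
-/

/-! ### Trees as systems of half-trees -/

section HalfTrees

variable {V : Type*} {𝓗 : Set (Set V)} {A B : Set V} {x y v w : V}

/-- The half-trees that contain `y` but not `x`. In a tree they correspond to the edges of the path
from `x` to `y`, so `separators 𝓗 x y = {A}` says that `A` is the oriented edge from `x` to `y`. -/
def separators (𝓗 : Set (Set V)) (x y : V) : Set (Set V) := {A ∈ 𝓗 | x ∉ A ∧ y ∈ A}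

/-- A tree with vertex set `V`, encoded by its half-trees: an oriented edge is identified with the
set of vertices on the side of its head, and reversing the edge takes the complement. -/
structure IsHalfTreeSystem (𝓗 : Set (Set V)) : Prop where
  compl_mem : ∀ A ∈ 𝓗, Aᶜ ∈ 𝓗
  nested : ∀ A ∈ 𝓗, ∀ B ∈ 𝓗, A ⊆ B ∨ A ⊆ Bᶜ ∨ Aᶜ ⊆ B ∨ Aᶜ ⊆ Bᶜ
  finite_separators : ∀ x y, (separators 𝓗 x y).Finite
  eq_of_separators_eq_empty : ∀ x y, separators 𝓗 x y = ∅ → x = y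
  exists_edge : ∀ A ∈ 𝓗, ∃ x y, separators 𝓗 x y = {A}

theorem mem_separators : A ∈ separators 𝓗 x y ↔ A ∈ 𝓗 ∧ x ∉ A ∧ y ∈ A := Iff.rfl

theorem mem_separators_of_edge (h : separators 𝓗 x y = {A}) : A ∈ 𝓗 ∧ x ∉ A ∧ y ∈ A :=
  mem_separators.1 (h ▸ Set.mem_singleton A)

theorem eq_of_edge (h : separators 𝓗 x y = {A}) (hB : B ∈ 𝓗) (hx : x ∉ B) (hy : y ∈ B) : B = A :=
  Set.mem_singleton_iff.1 (h ▸ mem_separators.2 ⟨hB, hx, hy⟩)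

namespace IsHalfTreeSystem

variable (h𝓗 : IsHalfTreeSystem 𝓗)
include h𝓗

theorem compl_mem_separators : Aᶜ ∈ separators 𝓗 x y ↔ A ∈ separators 𝓗 y x := by
  have hA : Aᶜ ∈ 𝓗 ↔ A ∈ 𝓗 := ⟨fun h => compl_compl A ▸ h𝓗.compl_mem _ h, h𝓗.compl_mem A⟩
  simp only [mem_separators, hA, Set.mem_compl_iff, not_not, and_comm]

theorem edge_symm (h : separators 𝓗 x y = {A}) : separators 𝓗 y x = {Aᶜ} := by
  ext B
  rw [← h𝓗.compl_mem_separators, h, Set.mem_singleton_iff, Set.mem_singleton_iff, compl_eq_comm,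
    eq_comm]

theorem separators_nonempty (h : x ≠ y) : (separators 𝓗 x y).Nonempty :=
  Set.nonempty_iff_ne_empty.2 fun h' => h (h𝓗.eq_of_separators_eq_empty x y h')

theorem separators_eq_insert_of_edge (h : separators 𝓗 y x = {A}) (hv : v ∉ A) :
    separators 𝓗 v x = insert A (separators 𝓗 v y) := by
  obtain ⟨hA, hyA, hxA⟩ := mem_separators_of_edge h
  ext B
  rw [Set.mem_insert_iff]
  constructor
  · rintro ⟨hB, hvB, hxB⟩
    by_cases hyB : y ∈ B
    · exact Or.inr ⟨hB, hvB, hyB⟩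
    · exact Or.inl (eq_of_edge h hB hyB hxB)
  · rintro (rfl | ⟨hB, hvB, hyB⟩)
    · exact ⟨hA, hv, hxA⟩
    · refine ⟨hB, hvB, by_contra fun hxB => hv ?_⟩
      rw [← eq_of_edge h (h𝓗.compl_mem B hB) (not_not.2 hyB) hxB]
      exact hvB

theorem edge_left_unique {x' y' : V} (h : separators 𝓗 x y = {A})
    (h' : separators 𝓗 x' y' = {A}) : x = x' := by
  by_contra hne
  obtain ⟨B, hB, hxB, hx'B⟩ := h𝓗.separators_nonempty hne
  obtain ⟨hA, hxA, hyA⟩ := mem_separators_of_edge h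
  obtain ⟨-, hx'A, hy'A⟩ := mem_separators_of_edge h'
  rcases h𝓗.nested A hA B hB with hAB | hAB | hAB | hAB
  · exact hx'A (eq_of_edge h hB hxB (hAB hyA) ▸ hx'B)
  · exact hxA (eq_of_edge h' (h𝓗.compl_mem B hB) (not_not.2 hx'B) (hAB hy'A) ▸ hxB)
  · exact hxB (hAB hxA)
  · exact hAB hx'A hx'B

theorem edge_right_unique {x' y' : V} (h : separators 𝓗 x y = {A})
    (h' : separators 𝓗 x' y' = {A}) : y = y' :=
  h𝓗.edge_left_unique (h𝓗.edge_symm h) (h𝓗.edge_symm h')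

theorem exists_edge_toward (h : x ≠ v) : ∃ A y, separators 𝓗 y x = {A} ∧ v ∉ A := by
  obtain ⟨A, ⟨hA, hvA, hxA⟩, hmin⟩ :=
    (h𝓗.finite_separators v x).exists_minimal (h𝓗.separators_nonempty h.symm)
  obtain ⟨u, w, huw⟩ := h𝓗.exists_edge A hA
  obtain ⟨-, huA, hwA⟩ := mem_separators_of_edge huw
  suffices w = x from ⟨A, u, this ▸ huw, hvA⟩
  by_contra hwx
  obtain ⟨D, hD, hwD, hxD⟩ := h𝓗.separators_nonempty hwx
  have huD : u ∉ D := fun huD =>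
    (eq_of_edge huw (h𝓗.compl_mem D hD) (not_not.2 huD) hwD ▸ hxA : x ∈ Dᶜ) hxD
  rcases h𝓗.nested D hD A hA with hDA | hDA | hDA | hDA
  · exact hwD (hmin ⟨hD, fun hvD => hvA (hDA hvD), hxD⟩ hDA hwA)
  · exact hDA hxD hxA
  · exact huA (hDA huD)
  · exact hDA hwD hwA

theorem edge_toward_unique {y' : V} {A' : Set V} (h : separators 𝓗 y x = {A}) (hv : v ∉ A)
    (h' : separators 𝓗 y' x = {A'}) (hv' : v ∉ A') : A = A' ∧ y = y' := by
  suffices hA : A = A' from ⟨hA, h𝓗.edge_left_unique h (hA ▸ h')⟩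
  by_contra hne
  obtain ⟨hA, hyA, hxA⟩ := mem_separators_of_edge h
  obtain ⟨hA', hy'A', hxA'⟩ := mem_separators_of_edge h'
  have hyA' : y ∈ A' := by_contra fun hy => hne (eq_of_edge h hA' hy hxA').symm
  have hy'A : y' ∈ A := by_contra fun hy => hne (eq_of_edge h' hA hy hxA)
  rcases h𝓗.nested A hA A' hA' with hAA | hAA | hAA | hAA
  · exact hy'A' (hAA hy'A)
  · exact hAA hxA hxA'
  · exact hv' (hAA hv)
  · exact hAA hyA hyA'

theorem ncard_separators_lt_of_edge (h : separators 𝓗 y x = {A}) (hv : v ∉ A) :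
    (separators 𝓗 v y).ncard < (separators 𝓗 v x).ncard := by
  rw [h𝓗.separators_eq_insert_of_edge h hv, Set.ncard_insert_of_notMem
    (fun hA => (mem_separators_of_edge h).2.1 hA.2.2) (h𝓗.finite_separators v y)]
  exact Nat.lt_succ_self _

theorem induction_from (v : V) {motive : V → Prop} (base : motive v)
    (step : ∀ A x y, separators 𝓗 y x = {A} → v ∉ A → motive y → motive x) (x : V) :
    motive x := by
  induction hn : (separators 𝓗 v x).ncard using Nat.strong_induction_on generalizing x with
  | _ n ih =>
    rcases eq_or_ne x v with rfl | hx
    · exact base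
    · obtain ⟨A, y, h, hv⟩ := h𝓗.exists_edge_toward hx
      exact step A x y h hv (ih _ (hn ▸ h𝓗.ncard_separators_lt_of_edge h hv) y rfl)

theorem rel_of_forall_separators (r : Setoid V) (hr : ∀ A ∈ separators 𝓗 v x,
    ∀ p q, separators 𝓗 p q = {A} → r p q) : r v x := by
  induction x using h𝓗.induction_from v with
  | base => exact r.refl v
  | step A x y h hv ih =>
    rw [h𝓗.separators_eq_insert_of_edge h hv] at hr
    exact r.trans (ih fun B hB => hr B (Or.inr hB)) (hr A (Or.inl rfl) y x h)

end IsHalfTreeSystem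

/-! ### Potentials -/

section Potential

variable {G : Type*} [Group G] {l : Set V → G} {k : V → G}

/-- `k` is a potential for the edge labelling `l`: crossing the edge `A` multiplies `k` on the right
by `l A`. -/
def IsPotential (𝓗 : Set (Set V)) (l : Set V → G) (k : V → G) : Prop :=
  ∀ A x y, separators 𝓗 x y = {A} → k y = k x * l A

open Classical in
/-- The product of the labels `l` along the path from `v` to a vertex. -/
noncomputable def pathProd (h𝓗 : IsHalfTreeSystem 𝓗) (v : V) (l : Set V → G) (x : V) : G :=
  if h : x = v then 1
  else pathProd h𝓗 v l (h𝓗.exists_edge_toward h).choose_spec.choose *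
    l (h𝓗.exists_edge_toward h).choose
termination_by (separators 𝓗 v x).ncard
decreasing_by
  obtain ⟨hedge, hv⟩ := (h𝓗.exists_edge_toward h).choose_spec.choose_spec
  exact h𝓗.ncard_separators_lt_of_edge hedge hv

theorem pathProd_self (h𝓗 : IsHalfTreeSystem 𝓗) : pathProd h𝓗 v l v = 1 := by
  rw [pathProd, dif_pos rfl]

theorem pathProd_of_edge (h𝓗 : IsHalfTreeSystem 𝓗) (h : separators 𝓗 y x = {A}) (hv : v ∉ A) :
    pathProd h𝓗 v l x = pathProd h𝓗 v l y * l A := by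
  have hx : x ≠ v := fun hx => hv (hx ▸ (mem_separators_of_edge h).2.2)
  obtain ⟨hedge, hv'⟩ := (h𝓗.exists_edge_toward hx).choose_spec.choose_spec
  obtain ⟨hA, hy⟩ := h𝓗.edge_toward_unique hedge hv' h hv
  rw [pathProd, dif_neg hx]
  exact congrArg₂ (· * ·) (congrArg _ hy) (congrArg _ hA)

theorem isPotential_pathProd (h𝓗 : IsHalfTreeSystem 𝓗) (hl : ∀ A ∈ 𝓗, l Aᶜ = (l A)⁻¹) :
    IsPotential 𝓗 l (pathProd h𝓗 v l) := by
  intro A x y h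
  by_cases hv : v ∈ A
  · rw [pathProd_of_edge h𝓗 (h𝓗.edge_symm h) (not_not.2 hv), hl A (mem_separators_of_edge h).1,
      inv_mul_cancel_right]
  · exact pathProd_of_edge h𝓗 h hv

theorem IsPotential.inv_smul_smul_mem [MulAction G V] (h𝓗 : IsHalfTreeSystem 𝓗)
    (hk : IsPotential 𝓗 l k) (hl : ∀ A ∈ 𝓗, ∀ t ∈ A, l A • t ∈ A)
    (h : separators 𝓗 x y = {A}) {t : V} (ht : t ∈ A) : (k y)⁻¹ • k t • t ∈ A := by
  induction y using h𝓗.induction_from t generalizing A x with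
  | base => rwa [inv_smul_smul]
  | step E y z he htE ih =>
    obtain ⟨hA, hxA, hyA⟩ := mem_separators_of_edge h
    obtain ⟨hE, -, hyE⟩ := mem_separators_of_edge he
    have hmem : (k y)⁻¹ • k t • t ∈ Eᶜ := by
      have := hl _ (h𝓗.compl_mem E hE) _ (ih (h𝓗.edge_symm he) htE)
      rwa [hk _ _ _ (h𝓗.edge_symm he), mul_inv_rev, mul_smul, smul_inv_smul] at this
    by_contra hn
    rcases h𝓗.nested A hA E hE with hAE | hAE | hAE | hAE
    · exact htE (hAE ht)
    · exact hAE hyA hyE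
    · exact hmem (hAE hn)
    · have hxE : x ∉ E := hAE hxA
      exact htE (eq_of_edge h hE hxE hyE ▸ ht)

end Potential

end HalfTrees

/-! ### Twisting along an edge -/

section HalfTreeAction

open scoped Pointwise

variable {G : Type*} [Group G] {V : Type*} [MulAction G V] {𝓗 : Set (Set V)} {A B : Set V}
  {x y v : V}

/-- The half-trees of a tree on which `G` acts without inverting edges. -/
structure IsHalfTreeAction (G : Type*) [Group G] {V : Type*} [MulAction G V] (𝓗 : Set (Set V)) :
    Prop extends IsHalfTreeSystem 𝓗 where
  smul_mem : ∀ g : G, ∀ A ∈ 𝓗, g • A ∈ 𝓗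
  smul_ne_compl : ∀ g : G, ∀ A ∈ 𝓗, g • A ≠ Aᶜ

theorem IsHalfTreeAction.smul_edge (h𝓗 : IsHalfTreeAction G 𝓗) (h : separators 𝓗 x y = {A})
    (g : G) : separators 𝓗 (g • x) (g • y) = {g • A} := by
  have hmem : ∀ B, g⁻¹ • B ∈ 𝓗 ↔ B ∈ 𝓗 := fun B =>
    ⟨fun h => smul_inv_smul g B ▸ h𝓗.smul_mem g _ h, h𝓗.smul_mem g⁻¹ B⟩
  ext B
  rw [Set.mem_singleton_iff, ← inv_smul_eq_iff, ← Set.mem_singleton_iff, ← h]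
  simp only [mem_separators, hmem, Set.mem_inv_smul_set_iff]

theorem IsHalfTreeAction.smul_eq_of_edge (h𝓗 : IsHalfTreeAction G 𝓗)
    (h : separators 𝓗 x y = {A}) {g : G} (hg : g • A = A) : g • x = x ∧ g • y = y := by
  have hgA := h𝓗.smul_edge h g
  rw [hg] at hgA
  exact ⟨h𝓗.edge_left_unique hgA h, h𝓗.edge_right_unique hgA h⟩

open Classical in
/-- The equivariant function (for conjugation on the target) on the orbit of `a` that sends `a` to
`z`, extended by `1`; it is only meaningful if `z` commutes with the stabilizer of `a`. -/
noncomputable def conjOnOrbit {X : Type*} [MulAction G X] (a : X) (z : G) (b : X) : G :=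
  if h : ∃ g : G, g • a = b then h.choose * z * h.choose⁻¹ else 1

section conjOnOrbit

variable {X : Type*} [MulAction G X] {a b : X} {z : G}

theorem conjOnOrbit_smul_self (hz : ∀ g : G, g • a = a → Commute g z) (g : G) :
    conjOnOrbit a z (g • a) = g * z * g⁻¹ := by
  have h : ∃ g' : G, g' • a = g • a := ⟨g, rfl⟩
  have hcomm := hz (h.choose⁻¹ * g) (by
    rw [mul_smul, inv_smul_eq_iff, h.choose_spec])
  rw [conjOnOrbit, dif_pos h, mul_inv_eq_iff_eq_mul]
  calc h.choose * z = h.choose * (z * (h.choose⁻¹ * g)) * g⁻¹ * h.choose := by group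
    _ = g * z * g⁻¹ * h.choose := by rw [← hcomm.eq]; group

theorem conjOnOrbit_eq_one (h : ¬ ∃ g : G, g • a = b) : conjOnOrbit a z b = 1 := by
  rw [conjOnOrbit, dif_neg h]

theorem conjOnOrbit_smul (hz : ∀ g : G, g • a = a → Commute g z) (g : G) (b : X) :
    conjOnOrbit a z (g • b) = g * conjOnOrbit a z b * g⁻¹ := by
  by_cases h : ∃ k : G, k • a = b
  · obtain ⟨k, rfl⟩ := h
    rw [← mul_smul, conjOnOrbit_smul_self hz, conjOnOrbit_smul_self hz]
    group
  · rw [conjOnOrbit_eq_one h, conjOnOrbit_eq_one, mul_one, mul_inv_cancel]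
    rintro ⟨k, hk⟩
    exact h ⟨g⁻¹ * k, by rw [mul_smul, hk, inv_smul_smul]⟩

end conjOnOrbit

section TwistHom

variable {l : Set V → G} {k : V → G}

theorem IsPotential.apply_smul (hk : IsPotential 𝓗 l k) (h𝓗 : IsHalfTreeAction G 𝓗)
    (hl : ∀ (g : G) (A : Set V), l (g • A) = g * l A * g⁻¹) (hv : k v = 1) (g : G) (x : V) :
    k (g • x) = k (g • v) * g * k x * g⁻¹ := by
  induction x using h𝓗.induction_from v with
  | base => rw [hv]; group
  | step A x y h _ ih => rw [hk _ _ _ (h𝓗.smul_edge h g), hk _ _ _ h, ih, hl]; group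

/-- The endomorphism attached to a potential `k`, normalised at `v`, of an equivariant edge
labelling. It is the one for which `t ↦ k t • t` becomes equivariant at `v`. -/
def twistHom (hk : IsPotential 𝓗 l k) (h𝓗 : IsHalfTreeAction G 𝓗)
    (hl : ∀ (g : G) (A : Set V), l (g • A) = g * l A * g⁻¹) (hv : k v = 1) : G →* G :=
  MonoidHom.mk' (fun g => k (g • v) * g) fun g h => by
    rw [mul_smul, hk.apply_smul h𝓗 hl hv g (h • v)]
    group

variable (hk : IsPotential 𝓗 l k) (h𝓗 : IsHalfTreeAction G 𝓗)
  (hl : ∀ (g : G) (A : Set V), l (g • A) = g * l A * g⁻¹) (hv : k v = 1)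

theorem twistHom_apply (g : G) : twistHom hk h𝓗 hl hv g = k (g • v) * g := rfl

theorem smul_smul_eq_twistHom_smul (g : G) : k (g • v) • g • v = twistHom hk h𝓗 hl hv g • v := by
  rw [twistHom_apply, mul_smul]

theorem twistHom_injective (hmem : ∀ A ∈ 𝓗, ∀ t ∈ A, l A • t ∈ A) :
    Function.Injective (twistHom hk h𝓗 hl hv) := by
  rw [injective_iff_map_eq_one]
  intro g hg
  by_cases hgv : g • v = v
  · rwa [twistHom_apply, hgv, hv, one_mul] at hg
  obtain ⟨E, y, hE, hgE⟩ := h𝓗.exists_edge_toward (Ne.symm hgv)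
  have hE' := h𝓗.edge_symm hE
  obtain ⟨hEc, hvE, -⟩ := mem_separators_of_edge hE'
  have hyv : (k y)⁻¹ • v ∈ Eᶜ := by
    have := hk.inv_smul_smul_mem h𝓗.toIsHalfTreeSystem hmem hE' hgE
    rwa [smul_smul_eq_twistHom_smul hk h𝓗 hl hv, hg, one_smul] at this
  rw [hk _ _ _ hE', hv, one_mul] at hyv
  exact absurd (smul_inv_smul (l Eᶜ) v ▸ hmem _ hEc _ hyv) hvE

theorem twistHom_ne (hmem : ∀ A ∈ 𝓗, ∀ t ∈ A, l A • t ∈ A) (h : separators 𝓗 v x = {A})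
    (hA : l A • A ⊂ A) (g : G) : twistHom hk h𝓗 hl hv g ≠ l A := by
  intro hg
  obtain ⟨hA𝓗, hvA, -⟩ := mem_separators_of_edge h
  have hkx : k x = l A := by rw [hk _ _ _ h, hv, one_mul]
  have hgv : k (g • v) • g • v = l A • v := by
    rw [smul_smul_eq_twistHom_smul hk h𝓗 hl hv, hg]
  by_cases hgA : g • v ∈ A
  · have := hk.inv_smul_smul_mem h𝓗.toIsHalfTreeSystem hmem h hgA
    rw [hgv, hkx, inv_smul_smul] at this
    exact hvA this
  · have hlv : l A • v ∉ A := by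
      have := hk.inv_smul_smul_mem h𝓗.toIsHalfTreeSystem hmem (h𝓗.edge_symm h) hgA
      rwa [hgv, hv, inv_one, one_smul] at this
    obtain ⟨-, -, hx⟩ := mem_separators_of_edge (h𝓗.smul_edge h (l A))
    exact hA.ne' (eq_of_edge (h𝓗.smul_edge h (l A)) hA𝓗 hlv (hA.subset hx))

end TwistHom

/-- The label on the oriented edges in the orbit of `A` is the conjugate of `z`, on the reversed
edges it is the conjugate of `z⁻¹`, and all the other edges carry the label `1`. -/
noncomputable def edgeTwist (A : Set V) (z : G) (B : Set V) : G :=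
  conjOnOrbit A z B * (conjOnOrbit A z Bᶜ)⁻¹

section edgeTwist

variable {z : G}

theorem edgeTwist_compl (B : Set V) : edgeTwist A z Bᶜ = (edgeTwist A z B)⁻¹ := by
  rw [edgeTwist, edgeTwist, _root_.compl_compl, mul_inv_rev, inv_inv]

theorem edgeTwist_smul (hz : ∀ g : G, g • A = A → Commute g z) (g : G) (B : Set V) :
    edgeTwist A z (g • B) = g * edgeTwist A z B * g⁻¹ := by
  rw [edgeTwist, edgeTwist, ← Set.smul_set_compl, conjOnOrbit_smul hz, conjOnOrbit_smul hz]
  group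

theorem edgeTwist_self (h𝓗 : IsHalfTreeAction G 𝓗) (hA : A ∈ 𝓗)
    (hz : ∀ g : G, g • A = A → Commute g z) : edgeTwist A z A = z := by
  have h := conjOnOrbit_smul_self hz 1
  rw [one_smul, one_mul, inv_one, mul_one] at h
  rw [edgeTwist, h, conjOnOrbit_eq_one, inv_one, mul_one]
  rintro ⟨g, hg⟩
  exact h𝓗.smul_ne_compl g A hA hg

theorem edgeTwist_smul_mem (h𝓗 : IsHalfTreeAction G 𝓗) (hA : A ∈ 𝓗)
    (hz : ∀ g : G, g • A = A → Commute g z) (hzA : z • A ⊆ A) :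
    ∀ B ∈ 𝓗, ∀ t ∈ B, edgeTwist A z B • t ∈ B := by
  suffices hconj : ∀ (g : G) (C : Set V), edgeTwist A z C • C ⊆ C →
      edgeTwist A z (g • C) • g • C ⊆ g • C by
    have hself : edgeTwist A z A • A ⊆ A := by rwa [edgeTwist_self h𝓗 hA hz]
    have hcompl : edgeTwist A z Aᶜ • Aᶜ ⊆ Aᶜ := by
      rw [edgeTwist_compl, Set.smul_set_compl, Set.compl_subset_compl, edgeTwist_self h𝓗 hA hz,
        Set.subset_smul_set_iff, inv_inv]
      exact hzA
    intro B _ t ht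
    by_cases h : ∃ g : G, g • A = B
    · obtain ⟨g, rfl⟩ := h
      exact hconj g A hself (Set.smul_mem_smul_set ht)
    by_cases h' : ∃ g : G, g • A = Bᶜ
    · obtain ⟨g, hg⟩ := h'
      obtain rfl : g • Aᶜ = B := by rw [Set.smul_set_compl, hg, _root_.compl_compl]
      exact hconj g Aᶜ hcompl (Set.smul_mem_smul_set ht)
    rwa [edgeTwist, conjOnOrbit_eq_one h, conjOnOrbit_eq_one h', inv_one, one_mul, one_smul]
  intro g C hC
  rw [edgeTwist_smul hz, smul_smul, inv_mul_cancel_right, mul_smul]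
  exact Set.smul_set_mono hC

end edgeTwist

theorem exists_injective_not_surjective_of_smul_ssubset (h𝓗 : IsHalfTreeAction G 𝓗) (hA : A ∈ 𝓗)
    {z : G} (hz : ∀ g : G, g • A = A → Commute g z) (hzA : z • A ⊂ A) :
    ∃ ψ : G →* G, Function.Injective ψ ∧ ¬ Function.Surjective ψ := by
  obtain ⟨v, w, hvw⟩ := h𝓗.exists_edge A hA
  have hself := edgeTwist_self h𝓗 hA hz
  have hmem := edgeTwist_smul_mem h𝓗 hA hz hzA.subset
  have hk := isPotential_pathProd (v := v) h𝓗.toIsHalfTreeSystem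
    fun B _ => edgeTwist_compl (A := A) (z := z) B
  have hkv := pathProd_self (v := v) (l := edgeTwist A z) h𝓗.toIsHalfTreeSystem
  refine ⟨twistHom hk h𝓗 (edgeTwist_smul hz) hkv, twistHom_injective hk h𝓗 _ hkv hmem, fun h => ?_⟩
  obtain ⟨g, hg⟩ := h (edgeTwist A z A)
  exact twistHom_ne hk h𝓗 _ hkv hmem hvw (hself.symm ▸ hzA) g hg

end HalfTreeAction

/-! ### Normalizers of edge stabilizers -/

section Normalizer

open scoped Pointwise
open MulAction (stabilizer mem_stabilizer_iff)
open Subgroup (normalizer centralizer)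

variable {G : Type*} [Group G]

theorem exists_pow_mem_centralizer_of_mem_normalizer {C : Subgroup G} [Finite C] {n : G}
    (hn : n ∈ normalizer (C : Set G)) : ∃ j, n ^ (j + 1) ∈ centralizer (C : Set G) := by
  obtain ⟨j, hj, h⟩ := (isOfFinOrder_of_finite (C.normalizerMonoidHom ⟨n, hn⟩)).exists_pow_eq_one
  rw [← map_pow, ← MonoidHom.mem_ker, Subgroup.normalizerMonoidHom_ker,
    Subgroup.mem_subgroupOf] at h
  exact ⟨j - 1, by rwa [Nat.sub_add_cancel hj]⟩

theorem smul_smul_eq_of_mem_normalizer {X : Type*} [MulAction G X] {C : Subgroup G} {m : G}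
    {x : X} (hm : m ∈ normalizer (C : Set G)) (hx : ∀ g ∈ C, g • x = x) :
    ∀ g ∈ C, g • m • x = m • x := by
  intro g hg
  have := hx _ ((Subgroup.mem_normalizer_iff.1 (inv_mem hm) g).1 hg)
  rwa [inv_inv, mul_smul, mul_smul, inv_smul_eq_iff] at this

theorem stabilizer_smul_eq_iff_mem_normalizer {X : Type*} [MulAction G X] {x : X} {m : G} :
    stabilizer G (m • x) = stabilizer G x ↔ m ∈ normalizer (stabilizer G x : Set G) := by
  rw [MulAction.stabilizer_smul_eq_stabilizer_map_conj, Subgroup.mem_normalizer_iff_map_conj_eq]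
  rfl

section Pow

variable {V : Type*} [MulAction G V] {A : Set V} {g : G}

theorem pow_succ_smul_set_subset (h : g • A ⊆ A) (j : ℕ) : g ^ (j + 1) • A ⊆ g • A := by
  induction j with
  | zero => rw [zero_add, pow_one]
  | succ j ih =>
    rw [pow_succ', mul_smul]
    exact Set.smul_set_mono (ih.trans h)

theorem smul_set_eq_of_subset_of_isOfFinOrder (hg : IsOfFinOrder g) (h : g • A ⊆ A) :
    g • A = A := by
  obtain ⟨j, hj, hj1⟩ := hg.exists_pow_eq_one
  refine h.antisymm ?_
  have := pow_succ_smul_set_subset h (j - 1)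
  rwa [Nat.sub_add_cancel hj, hj1, one_smul] at this

end Pow

namespace IsHalfTreeAction

variable {V : Type*} [MulAction G V] {𝓗 : Set (Set V)} {A B : Set V} {n : G} {x y : V}
  (h𝓗 : IsHalfTreeAction G 𝓗)
include h𝓗

theorem smul_eq_of_isOfFinOrder {g : G} (hg : IsOfFinOrder g) (hx : g • x = x) (hy : g • y = y)
    (hA : A ∈ separators 𝓗 x y) : g • A = A := by
  obtain ⟨hA, hxA, hyA⟩ := hA
  have hxg : x ∉ g • A := by rwa [← hx, Set.smul_mem_smul_set_iff]
  have hyg : y ∈ g • A := by rwa [← hy, Set.smul_mem_smul_set_iff]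
  rcases h𝓗.nested _ (h𝓗.smul_mem g A hA) A hA with h | h | h | h
  · exact smul_set_eq_of_subset_of_isOfFinOrder hg h
  · exact absurd hyA (h hyg)
  · exact absurd (h hxg) hxA
  · rw [Set.compl_subset_compl, Set.subset_smul_set_iff] at h
    exact (inv_smul_eq_iff.1 (smul_set_eq_of_subset_of_isOfFinOrder hg.inv h)).symm

theorem smul_eq_of_smul_subset_of_mem_normalizer (hco : CoHopfian G) (hA : A ∈ 𝓗)
    [Finite (stabilizer G A)] (hn : n ∈ normalizer (stabilizer G A : Set G)) (h : n • A ⊆ A) :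
    n • A = A := by
  by_contra hne
  obtain ⟨j, hj⟩ := exists_pow_mem_centralizer_of_mem_normalizer hn
  obtain ⟨ψ, hinj, hsurj⟩ := exists_injective_not_surjective_of_smul_ssubset h𝓗 hA
    (fun g hg => (Subgroup.mem_centralizer_iff.1 hj g hg))
    ((pow_succ_smul_set_subset h j).trans_ssubset (h.ssubset_of_ne hne))
  exact hsurj (hco ψ hinj)

theorem smul_eq_or_disjoint_or_codisjoint (hco : CoHopfian G) (hA : A ∈ 𝓗)
    [Finite (stabilizer G A)] (hn : n ∈ normalizer (stabilizer G A : Set G)) :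
    n • A = A ∨ n • A ⊆ Aᶜ ∨ (n • A)ᶜ ⊆ A := by
  have heq := fun m hm => h𝓗.smul_eq_of_smul_subset_of_mem_normalizer hco hA (n := m) hm
  rcases h𝓗.nested _ (h𝓗.smul_mem n A hA) A hA with h | h | h | h
  · exact Or.inl (heq n hn h)
  · exact Or.inr (Or.inl h)
  · exact Or.inr (Or.inr h)
  · rw [Set.compl_subset_compl, Set.subset_smul_set_iff] at h
    exact Or.inl (inv_smul_eq_iff.1 (heq _ (inv_mem hn) h)).symm

theorem not_disjoint_and_codisjoint {n' : G} (hco : CoHopfian G) (hA : A ∈ 𝓗)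
    [Finite (stabilizer G A)] (hn : n ∈ normalizer (stabilizer G A : Set G))
    (hn' : n' ∈ normalizer (stabilizer G A : Set G)) : ¬ (n • A ⊆ Aᶜ ∧ (n' • A)ᶜ ⊆ A) := by
  rintro ⟨h, h'⟩
  have hA_le : Aᶜ ⊆ n' • A := Set.compl_subset_comm.1 h'
  have heq : n • A = n' • A := by
    rw [← inv_smul_eq_iff, ← mul_smul]
    refine h𝓗.smul_eq_of_smul_subset_of_mem_normalizer hco hA (mul_mem (inv_mem hn') hn) ?_
    rw [mul_smul, ← Set.subset_smul_set_iff]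
    exact h.trans hA_le
  exact h𝓗.smul_ne_compl n A hA (h.antisymm (heq ▸ hA_le))

end IsHalfTreeAction

/-- An oriented edge `B` with stabilizer `C` is outward if it is moved by the normalizer of `C` and
every translate by the normalizer is `B` itself or lies behind `B`. The normalizer then acts as a
star on these edges, and all of them point away from its centre. -/
structure IsOutward {V : Type*} [MulAction G V] (𝓗 : Set (Set V)) (C : Subgroup G) (B : Set V) :
    Prop where
  mem : B ∈ 𝓗
  stabilizer_eq : stabilizer G B = C
  exists_smul_ne : ∃ n ∈ normalizer (C : Set G), n • B ≠ B
  smul_eq_or_subset_compl : ∀ n ∈ normalizer (C : Set G), n • B = B ∨ n • B ⊆ Bᶜ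

section Outward

variable {V : Type*} [MulAction G V] {𝓗 : Set (Set V)} {C : Subgroup G} {A B D : Set V} {u : V}

namespace IsOutward

theorem smul (h𝓗 : IsHalfTreeAction G 𝓗) (hB : IsOutward 𝓗 C B) {m : G}
    (hm : m ∈ normalizer (C : Set G)) : IsOutward 𝓗 C (m • B) := by
  have hsmul (n : G) : n • m • B = m • (m⁻¹ * n * m) • B := by
    simp only [smul_smul, mul_assoc, mul_inv_cancel_left]
  refine ⟨h𝓗.smul_mem m B hB.mem, ?_, ?_, fun n hn => ?_⟩
  · rw [← hB.stabilizer_eq] at hm ⊢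
    exact stabilizer_smul_eq_iff_mem_normalizer.2 hm
  · obtain ⟨n, hn, hne⟩ := hB.exists_smul_ne
    refine ⟨m * n * m⁻¹, mul_mem (mul_mem hm hn) (inv_mem hm), fun h => hne ?_⟩
    rwa [mul_smul, inv_smul_smul, mul_smul, smul_left_cancel_iff] at h
  · rw [hsmul, smul_left_cancel_iff, ← Set.smul_set_compl, Set.smul_set_subset_smul_set_iff]
    exact hB.smul_eq_or_subset_compl _ (mul_mem (mul_mem (inv_mem hm) hn) hm)

theorem not_compl_subset (h𝓗 : IsHalfTreeAction G 𝓗) (hB : IsOutward 𝓗 C B)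
    (hD : IsOutward 𝓗 C D) : ¬ Bᶜ ⊆ D := by
  intro hBD
  obtain ⟨n, hn, hne⟩ := hB.exists_smul_ne
  have hnB : n • B ⊆ Bᶜ := (hB.smul_eq_or_subset_compl n hn).resolve_left hne
  have hBnD : (n • B)ᶜ ⊆ n • D := by rwa [← Set.smul_set_compl, Set.smul_set_subset_smul_set_iff]
  rcases hD.smul_eq_or_subset_compl n hn with h | h
  · obtain ⟨x, y, hxy⟩ := h𝓗.exists_edge D hD.mem
    have hxB : x ∈ B := by_contra fun hx => (mem_separators_of_edge hxy).2.1 (hBD hx)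
    exact (mem_separators_of_edge hxy).2.1 (h ▸ hBnD fun hx => hnB hx hxB)
  · have hB_le : (n • B)ᶜ ⊆ B := (hBnD.trans h).trans (Set.compl_subset_comm.1 hBD)
    exact h𝓗.smul_ne_compl n B hB.mem (hnB.antisymm (Set.compl_subset_comm.1 hB_le))

theorem finite_setOf_mem
    (hfin : (Quotient.mk (MulAction.orbitRel G (Set V)) '' 𝓗).Finite) (C : Subgroup G) (u : V) :
    {B | IsOutward 𝓗 C B ∧ u ∈ B}.Finite := by
  refine Set.Finite.of_injOn (fun B hB => Set.mem_image_of_mem _ hB.1.mem) ?_ hfin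
  rintro B ⟨hB, huB⟩ D ⟨hD, huD⟩ hBD
  obtain ⟨g, rfl⟩ := Quotient.exact hBD
  have hg : g ∈ normalizer (C : Set G) := by
    rw [← hD.stabilizer_eq]
    exact stabilizer_smul_eq_iff_mem_normalizer.1 (hB.stabilizer_eq.trans hD.stabilizer_eq.symm)
  exact (hD.smul_eq_or_subset_compl g hg).resolve_right fun h => h huB huD

end IsOutward

theorem IsHalfTreeAction.forall_smul_eq_or_isOutward (h𝓗 : IsHalfTreeAction G 𝓗)
    (hco : CoHopfian G) (hA : A ∈ 𝓗) (hAC : stabilizer G A = C) [Finite C] :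
    (∀ n ∈ normalizer (C : Set G), n • A = A) ∨ IsOutward 𝓗 C A ∨ IsOutward 𝓗 C Aᶜ := by
  subst hAC
  have hcases := fun n hn => h𝓗.smul_eq_or_disjoint_or_codisjoint hco hA (n := n) hn
  by_cases hfix : ∀ n ∈ normalizer (stabilizer G A : Set G), n • A = A
  · exact Or.inl hfix
  push Not at hfix
  right
  by_cases hcod : ∃ n ∈ normalizer (stabilizer G A : Set G), (n • A)ᶜ ⊆ A
  · obtain ⟨n', hn', h'⟩ := hcod
    right
    refine ⟨h𝓗.compl_mem A hA, stabilizer_compl .., ?_, fun n hn => ?_⟩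
    · simpa only [Set.smul_set_compl, ne_eq, compl_inj_iff] using hfix
    · rw [Set.smul_set_compl, compl_inj_iff, _root_.compl_compl]
      exact (hcases n hn).imp_right fun h => h.resolve_left fun h =>
        h𝓗.not_disjoint_and_codisjoint hco hA hn hn' ⟨h, h'⟩
  · left
    push Not at hcod
    refine ⟨hA, rfl, hfix, fun n hn => ?_⟩
    exact (hcases n hn).imp_right fun h => h.resolve_right (hcod n hn)

theorem IsHalfTreeAction.exists_notMem_of_isOutward (h𝓗 : IsHalfTreeAction G 𝓗)
    (hfin : (Quotient.mk (MulAction.orbitRel G (Set V)) '' 𝓗).Finite) {x : V}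
    (hx : ∀ g ∈ C, g • x = x) :
    ∃ u : V, (∀ g ∈ C, g • u = u) ∧ ∀ B, IsOutward 𝓗 C B → u ∉ B := by
  obtain ⟨u, hu, hmin⟩ := exists_minimalFor_of_wellFoundedLT (fun u : V => ∀ g ∈ C, g • u = u)
    (fun u => {B | IsOutward 𝓗 C B ∧ u ∈ B}.ncard) ⟨x, hx⟩
  refine ⟨u, hu, fun B hB huB => ?_⟩
  obtain ⟨v, w, hvw⟩ := h𝓗.exists_edge B hB.mem
  obtain ⟨-, hvB, hwB⟩ := mem_separators_of_edge hvw
  have hv : ∀ g ∈ C, g • v = v := fun g hg =>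
    (h𝓗.smul_eq_of_edge hvw (mem_stabilizer_iff.1 (hB.stabilizer_eq ▸ hg))).1
  have hsub : {D | IsOutward 𝓗 C D ∧ v ∈ D} ⊆ {D | IsOutward 𝓗 C D ∧ u ∈ D} := by
    rintro D ⟨hD, hvD⟩
    refine ⟨hD, ?_⟩
    rcases h𝓗.nested B hB.mem D hD.mem with h | h | h | h
    · exact h huB
    · have : Dᶜ = B := eq_of_edge hvw (h𝓗.compl_mem D hD.mem) (not_not.2 hvD) (h hwB)
      exact absurd (compl_eq_comm.1 this).subset (hB.not_compl_subset h𝓗 hD)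
    · exact absurd h (hB.not_compl_subset h𝓗 hD)
    · exact absurd hvD (h hvB)
  have hssub := hsub.ssubset_of_ne fun h => hvB (h.ge ⟨hB, huB⟩).2
  have hlt := Set.ncard_lt_ncard hssub (IsOutward.finite_setOf_mem hfin C u)
  exact hlt.not_ge (hmin hv hlt.le)

theorem IsHalfTreeAction.exists_center (h𝓗 : IsHalfTreeAction G 𝓗) (hco : CoHopfian G)
    (hfin : (Quotient.mk (MulAction.orbitRel G (Set V)) '' 𝓗).Finite) [Finite C] {x : V}
    (hx : ∀ g ∈ C, g • x = x) :
    ∃ u : V, (∀ g ∈ C, g • u = u) ∧ ∀ m ∈ normalizer (C : Set G),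
      ∀ B ∈ 𝓗, stabilizer G B = C → (m • u ∈ B ↔ u ∈ B) := by
  obtain ⟨u, hu, hout⟩ := h𝓗.exists_notMem_of_isOutward hfin hx
  have hout' : ∀ m ∈ normalizer (C : Set G), ∀ B, IsOutward 𝓗 C B → m • u ∉ B :=
    fun m hm B hB h => hout _ (hB.smul h𝓗 (inv_mem hm)) (Set.mem_inv_smul_set_iff.2 h)
  refine ⟨u, hu, fun m hm B hB hBC => ?_⟩
  rcases h𝓗.forall_smul_eq_or_isOutward hco hB hBC with h | h | h
  · conv_lhs => rw [← h m hm, Set.smul_mem_smul_set_iff]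
  · exact iff_of_false (hout' m hm B h) (hout B h)
  · exact iff_of_true (not_not.1 (hout' m hm _ h)) (not_not.1 (hout _ h))

end Outward

end Normalizer

/-! ### Endomorphisms that are inner on vertex stabilizers -/

section InnerOnStabilizers

open scoped Pointwise
open MulAction (stabilizer orbitRel mem_stabilizer_iff)
open Subgroup (normalizer centralizer)

variable {G : Type*} [Group G] {V : Type*} {ψ : G →* G} {γ : V → G} {x y : V}

/-- Points `x` and `y` are related if `γ x` and `γ y` lie in the same right coset of the range of
`ψ`. If `γ` is a `ψ`-twisted equivariant map, then `ψ` is surjective as soon as all the points of an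
orbit are related. -/
def rangeRel (ψ : G →* G) (γ : V → G) : Setoid V :=
  (QuotientGroup.rightRel ψ.range).comap γ

theorem rangeRel_iff : rangeRel ψ γ x y ↔ γ y * (γ x)⁻¹ ∈ ψ.range :=
  QuotientGroup.rightRel_apply

variable [MulAction G V] {𝓗 : Set (Set V)} {A : Set V} {C : Subgroup G}

theorem exists_twisted_equivariant
    (hψ : ∀ x : V, ∃ q : G, ∀ h ∈ stabilizer G x, ψ h = q * h * q⁻¹) :
    ∃ γ : V → G, ∀ (h : G) (x : V), γ (h • x) = ψ h * γ x * h⁻¹ := by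
  choose q hq using hψ
  let r (x : V) : V := (Quotient.mk (orbitRel G V) x).out
  have hr (h : G) (x : V) : r (h • x) = r x :=
    congrArg Quotient.out (Quotient.sound (s := orbitRel G V) ⟨h, rfl⟩)
  have ht (x : V) : ∃ t : G, t • r x = x :=
    (orbitRel G V).symm (Quotient.mk_out (s := orbitRel G V) x)
  choose t ht using ht
  let γ (x : V) : G := ψ (t x) * q (r x) * (t x)⁻¹
  have hγ (x : V) (g : G) (hg : g • r x = x) : γ x = ψ g * q (r x) * g⁻¹ := by
    have h := hq (r x) (g⁻¹ * t x) (by rw [mem_stabilizer_iff, mul_smul, ht, inv_smul_eq_iff, hg])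
    rw [map_mul, map_inv, inv_mul_eq_iff_eq_mul] at h
    simp only [γ, h]
    group
  refine ⟨γ, fun h x => ?_⟩
  rw [hγ (h • x) (h * t x) (by rw [hr, mul_smul, ht]), hr, map_mul]
  simp only [γ]
  group

section Twisted

variable (hγ : ∀ (h : G) (x : V), γ (h • x) = ψ h * γ x * h⁻¹)
include hγ

theorem rangeRel_smul_iff (g : G) : rangeRel ψ γ x (g • x) ↔ γ x * g * (γ x)⁻¹ ∈ ψ.range := by
  rw [rangeRel_iff, hγ, ← inv_mem_iff, ← Subgroup.mul_mem_cancel_right _ (ψ.mem_range.2 ⟨g, rfl⟩)]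
  group

theorem apply_eq_conj_of_smul_eq {g : G} (hg : g • x = x) : ψ g = γ x * g * (γ x)⁻¹ := by
  rw [eq_mul_inv_iff_mul_eq, ← mul_inv_eq_iff_eq_mul, ← hγ, hg]

theorem inv_mul_mem_centralizer (hx : C ≤ stabilizer G x) (hy : C ≤ stabilizer G y) :
    (γ y)⁻¹ * γ x ∈ centralizer (C : Set G) := by
  rw [Subgroup.mem_centralizer_iff]
  intro g hg
  have h : γ x * g * (γ x)⁻¹ = γ y * g * (γ y)⁻¹ := by
    rw [← apply_eq_conj_of_smul_eq hγ (hx hg), ← apply_eq_conj_of_smul_eq hγ (hy hg)]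
  calc g * ((γ y)⁻¹ * γ x) = (γ y)⁻¹ * (γ y * g * (γ y)⁻¹) * γ x := by group
    _ = (γ y)⁻¹ * γ x * g := by rw [← h]; group

theorem rangeRel_of_forall_normalizer {u : V}
    (h : ∀ m ∈ normalizer (C : Set G), rangeRel ψ γ u (m • u))
    (hx : C ≤ stabilizer G x) (hu : C ≤ stabilizer G u) : rangeRel ψ γ u x := by
  have := (rangeRel_smul_iff hγ _).1
    (h _ (Subgroup.centralizer_le_normalizer _ (inv_mul_mem_centralizer hγ hx hu)))
  rwa [mul_inv_cancel_left, ← rangeRel_iff] at this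

theorem surjective_of_forall_rangeRel [Nonempty V] (h : ∀ x y, rangeRel ψ γ x y) :
    Function.Surjective ψ := by
  intro g
  obtain ⟨v⟩ := ‹Nonempty V›
  have := (rangeRel_smul_iff hγ _).1 (h v (((γ v)⁻¹ * g * γ v) • v))
  rwa [mul_assoc, mul_assoc, mul_assoc, mul_inv_cancel_left, mul_inv_cancel, mul_one] at this

end Twisted

theorem exists_forall_card_stabilizer_le (hfin : (Quotient.mk (orbitRel G (Set V)) '' 𝓗).Finite) :
    ∃ M, ∀ A ∈ 𝓗, Nat.card (stabilizer G A) ≤ M := by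
  have hcard (A B : Set V) (h : orbitRel G (Set V) A B) :
      Nat.card (stabilizer G A) = Nat.card (stabilizer G B) :=
    Nat.card_congr (MulAction.stabilizerEquivStabilizerOfOrbitRel h).toEquiv
  obtain ⟨M, hM⟩ := (hfin.image (Quotient.lift _ hcard)).bddAbove
  exact ⟨M, fun A hA => hM ⟨_, ⟨A, hA, rfl⟩, rfl⟩⟩

namespace IsHalfTreeAction

variable (h𝓗 : IsHalfTreeAction G 𝓗)
include h𝓗

theorem stabilizer_le_of_edge (h : separators 𝓗 x y = {A}) :
    stabilizer G A ≤ stabilizer G x ⊓ stabilizer G y :=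
  fun _ hg => h𝓗.smul_eq_of_edge h hg

theorem finite_stabilizer (hst : ∀ x : V, Finite (stabilizer G x)) (hA : A ∈ 𝓗) :
    Finite (stabilizer G A) := by
  obtain ⟨x, y, h⟩ := h𝓗.exists_edge A hA
  have := hst x
  exact Finite.Set.subset (stabilizer G x : Set G)
    fun _ hg => (h𝓗.stabilizer_le_of_edge h hg).1

theorem le_stabilizer_of_mem_separators [Finite C] (hx : C ≤ stabilizer G x)
    (hy : C ≤ stabilizer G y) (hA : A ∈ separators 𝓗 x y) : C ≤ stabilizer G A :=
  fun g hg => h𝓗.smul_eq_of_isOfFinOrder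
    (Submonoid.isOfFinOrder_coe.2 (isOfFinOrder_of_finite (⟨g, hg⟩ : C))) (hx hg) (hy hg) hA

theorem rangeRel_of_edge (hco : CoHopfian G)
    (hfin : (Quotient.mk (orbitRel G (Set V)) '' 𝓗).Finite)
    (hst : ∀ x : V, Finite (stabilizer G x))
    (hγ : ∀ (h : G) (x : V), γ (h • x) = ψ h * γ x * h⁻¹) (h : separators 𝓗 x y = {A})
    (ih : ∀ B ∈ 𝓗, stabilizer G A < stabilizer G B →
      ∀ p q, separators 𝓗 p q = {B} → rangeRel ψ γ p q) :
    rangeRel ψ γ x y := by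
  have hle := h𝓗.stabilizer_le_of_edge h
  have := h𝓗.finite_stabilizer hst (mem_separators_of_edge h).1
  obtain ⟨u, hu, hsep⟩ := h𝓗.exists_center hco hfin fun g hg => (hle hg).1
  have hm : ∀ m ∈ normalizer (stabilizer G A : Set G), rangeRel ψ γ u (m • u) := by
    refine fun m hm => h𝓗.rel_of_forall_separators _ fun B hB => ih B hB.1 ?_
    refine (h𝓗.le_stabilizer_of_mem_separators hu
      (smul_smul_eq_of_mem_normalizer hm hu) hB).lt_of_ne fun heq => ?_
    exact hB.2.1 ((hsep m hm B hB.1 heq.symm).1 hB.2.2)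
  exact (rangeRel ψ γ).trans
    ((rangeRel ψ γ).symm (rangeRel_of_forall_normalizer hγ hm (hle.trans inf_le_left) hu))
    (rangeRel_of_forall_normalizer hγ hm (hle.trans inf_le_right) hu)

theorem surjective_of_conj_on_stabilizer [Nonempty V] (hco : CoHopfian G)
    (hfin : (Quotient.mk (orbitRel G (Set V)) '' 𝓗).Finite)
    (hst : ∀ x : V, Finite (stabilizer G x))
    (hψ : ∀ x : V, ∃ q : G, ∀ h ∈ stabilizer G x, ψ h = q * h * q⁻¹) :
    Function.Surjective ψ := by
  obtain ⟨γ, hγ⟩ := exists_twisted_equivariant hψ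
  obtain ⟨M, hM⟩ := exists_forall_card_stabilizer_le hfin
  have hedge : ∀ A x y, separators 𝓗 x y = {A} → rangeRel ψ γ x y := by
    intro A
    induction hn : M - Nat.card (stabilizer G A) using Nat.strong_induction_on generalizing A with
    | _ n ih =>
    intro x y h
    refine h𝓗.rangeRel_of_edge hco hfin hst hγ h fun B hB hlt => ih _ ?_ B rfl
    have := h𝓗.finite_stabilizer hst hB
    have hcard : Nat.card (stabilizer G A) < Nat.card (stabilizer G B) :=
      Set.ncard_lt_ncard (SetLike.coe_ssubset_coe.2 hlt) (Set.toFinite (stabilizer G B : Set G))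
    have := hM B hB
    omega
  exact surjective_of_forall_rangeRel hγ fun x y =>
    h𝓗.rel_of_forall_separators _ fun A _ => hedge A

end IsHalfTreeAction

end InnerOnStabilizers

/-! ### Residual finiteness and the Hopf property -/

section Hopfian

open Group (ResiduallyFinite)

variable {G : Type*} [Group G]

theorem exists_perm_extending_mul_left (A : Finset G) (g : G) :
    ∃ σ : Equiv.Perm A, ∀ x : A, g * x ∈ A → (σ x : G) = g * x :=
  Set.MapsTo.exists_equiv_extend_of_card_eq (Fintype.card_coe A)
    (s := {x : A | g * x ∈ A}) (f := fun x : A => g * x) (fun _ hx => hx)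
    ((mul_right_injective g).comp Subtype.val_injective).injOn

theorem lift_mk_singleton_apply {α : Type*} {A : Finset (FreeGroup α)} {σ : α → Equiv.Perm A}
    (hσ : ∀ i, ∀ x : A, FreeGroup.of i * (x : FreeGroup α) ∈ A →
      (σ i x : FreeGroup α) = FreeGroup.of i * x)
    (s : α × Bool) (y : A) (hy : FreeGroup.mk [s] * (y : FreeGroup α) ∈ A) :
    (FreeGroup.lift σ (FreeGroup.mk [s]) y : FreeGroup α) = FreeGroup.mk [s] * y := by
  obtain ⟨i, b⟩ := s
  cases b with
  | true =>
    change (FreeGroup.lift σ (FreeGroup.of i) y : FreeGroup α) = FreeGroup.of i * y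
    rw [FreeGroup.lift_apply_of]
    exact hσ i y hy
  | false =>
    have hinv : FreeGroup.mk [(i, false)] = (FreeGroup.of i)⁻¹ := rfl
    rw [hinv] at hy ⊢
    rw [map_inv, FreeGroup.lift_apply_of]
    suffices (σ i)⁻¹ y = ⟨_, hy⟩ from congrArg Subtype.val this
    rw [Equiv.Perm.inv_eq_iff_eq]
    refine Subtype.ext ?_
    rw [hσ i ⟨_, hy⟩ (by rw [mul_inv_cancel_left]; exact y.2), mul_inv_cancel_left]

theorem lift_mk_apply_one {α : Type*} {A : Finset (FreeGroup α)} {σ : α → Equiv.Perm A}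
    (hσ : ∀ i, ∀ x : A, FreeGroup.of i * (x : FreeGroup α) ∈ A →
      (σ i x : FreeGroup α) = FreeGroup.of i * x)
    (h1 : 1 ∈ A) (L : List (α × Bool)) (hL : ∀ L', L' <:+ L → FreeGroup.mk L' ∈ A) :
    (FreeGroup.lift σ (FreeGroup.mk L) ⟨1, h1⟩ : FreeGroup α) = FreeGroup.mk L := by
  induction L with
  | nil => rw [← FreeGroup.one_eq_mk, map_one, Equiv.Perm.one_apply]
  | cons s L ih =>
    specialize ih fun L' h => hL L' (h.trans (List.suffix_cons s L))
    have hcons : FreeGroup.mk (s :: L) = FreeGroup.mk [s] * FreeGroup.mk L :=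
      (FreeGroup.mul_mk (L₁ := [s])).symm
    rw [hcons, map_mul, Equiv.Perm.mul_apply, lift_mk_singleton_apply hσ, ih]
    rw [ih, ← hcons]
    exact hL _ List.suffix_rfl

theorem residuallyFinite_freeGroup (α : Type*) : ResiduallyFinite (FreeGroup α) := by
  classical
  refine Group.residuallyFinite_of_forall_exists_finite_monoidHom fun w hw => ?_
  let A : Finset (FreeGroup α) := (w.toWord.tails.map FreeGroup.mk).toFinset
  have hA (L : List (α × Bool)) (hL : L <:+ w.toWord) : FreeGroup.mk L ∈ A :=
    List.mem_toFinset.2 (List.mem_map_of_mem ((List.mem_tails _ _).2 hL))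
  choose σ hσ using fun i => exists_perm_extending_mul_left A (FreeGroup.of i)
  refine ⟨Equiv.Perm A, inferInstance, inferInstance, FreeGroup.lift σ, fun h => hw ?_⟩
  have h1 : (1 : FreeGroup α) ∈ A := hA [] List.nil_suffix
  have := lift_mk_apply_one hσ h1 w.toWord hA
  rwa [FreeGroup.mk_toWord, h, Equiv.Perm.one_apply, eq_comm] at this

theorem residuallyFinite_of_injective {G' : Type*} [Group G'] [ResiduallyFinite G'] (f : G →* G')
    (hf : Function.Injective f) : ResiduallyFinite G :=
  Group.residuallyFinite_iff_forall_finiteIndexNormalSubgroup.2 fun g hg =>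
    (map_eq_one_iff f hf).1 <| Group.eq_one_iff_forall_finiteIndexNormalSubroup (f g) fun K =>
      hg (K.comap f)

theorem residuallyFinite_of_finiteIndex (F : Subgroup G) [hF : F.FiniteIndex]
    [ResiduallyFinite F] : ResiduallyFinite G := by
  rw [Group.residuallyFinite_iff_exists_finiteIndex]
  intro g hg
  by_cases hgF : g ∈ F
  · obtain ⟨K, hK, hgK⟩ := Group.residuallyFinite_iff_exists_finiteIndex.1 ‹_›
      (⟨g, hgF⟩ : F) (fun h => hg (congrArg Subtype.val h))
    refine ⟨K.map F.subtype, ⟨?_⟩, fun h => hgK ?_⟩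
    · rw [Subgroup.index_map_subtype]
      exact mul_ne_zero hK.index_ne_zero hF.index_ne_zero
    · exact (Subgroup.mem_map_iff_mem F.subtype_injective (x := ⟨g, hgF⟩)).1 h
  · exact ⟨F, hF, hgF⟩

theorem VirtuallyFree.residuallyFinite (h : VirtuallyFree G) : ResiduallyFinite G := by
  obtain ⟨F, hF, ⟨_⟩⟩ := h
  have := residuallyFinite_freeGroup (IsFreeGroup.Generators F)
  have := residuallyFinite_of_injective (IsFreeGroup.toFreeGroup F).toMonoidHom
    (IsFreeGroup.toFreeGroup F).injective
  exact residuallyFinite_of_finiteIndex F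

theorem finite_monoidHom_of_fg [hG : Group.FG G] (Q : Type*) [Group Q] [Finite Q] :
    Finite (G →* Q) := by
  obtain ⟨S, hS⟩ := hG.out
  refine Finite.of_injective (fun (θ : G →* Q) (s : S) => θ s) fun θ θ' h => ?_
  exact MonoidHom.eq_of_eqOn_dense hS fun s hs => congrFun h ⟨s, hs⟩

-- Precomposition with `ψ` permutes the finitely many homomorphisms to a given finite group, so
-- every finite quotient map factors through `ψ` and kills its kernel.
theorem injective_of_surjective_of_residuallyFinite [Group.FG G] [ResiduallyFinite G] {ψ : G →* G}
    (hψ : Function.Surjective ψ) : Function.Injective ψ := by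
  refine (injective_iff_map_eq_one ψ).2 fun g hg =>
    Group.eq_one_iff_forall_finiteIndexNormalSubroup g fun N => ?_
  have := finite_monoidHom_of_fg (G := G) (G ⧸ N.toSubgroup)
  have hinj : Function.Injective fun θ : G →* G ⧸ N.toSubgroup => θ.comp ψ :=
    fun _ _ h => (MonoidHom.cancel_right hψ).1 h
  obtain ⟨θ, hθ⟩ := Finite.injective_iff_surjective.1 hinj (QuotientGroup.mk' N.toSubgroup)
  refine (QuotientGroup.eq_one_iff (N := N.toSubgroup) g).1 ?_
  rw [← QuotientGroup.mk'_apply, ← hθ, MonoidHom.comp_apply, hg, map_one]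

end Hopfian

/-! ### Tight cuts in graphs -/

section Cuts

variable {X : Type*} {Γ : SimpleGraph X} {D E F : Set X} {x y : X} {k : ℕ}

/-- The edge boundary of a set of vertices, as the set of its edges oriented outwards. -/
def outBoundary (Γ : SimpleGraph X) (E : Set X) : Set (X × X) :=
  {p | Γ.Adj p.1 p.2 ∧ p.1 ∈ E ∧ p.2 ∉ E}

theorem outBoundary_compl (Γ : SimpleGraph X) (E : Set X) :
    outBoundary Γ Eᶜ = Prod.swap '' outBoundary Γ E := by
  ext ⟨x, y⟩
  simp only [outBoundary, Set.image_swap_eq_preimage_swap, Set.mem_preimage, Set.mem_ofPred_eq,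
    Prod.fst_swap, Prod.snd_swap, Set.mem_compl_iff, not_not, Γ.adj_comm x y, and_comm]

theorem ncard_outBoundary_compl (Γ : SimpleGraph X) (E : Set X) :
    (outBoundary Γ Eᶜ).ncard = (outBoundary Γ E).ncard := by
  rw [outBoundary_compl, Set.ncard_image_of_injective _ Prod.swap_injective]

theorem finite_outBoundary_compl (hE : (outBoundary Γ E).Finite) : (outBoundary Γ Eᶜ).Finite := by
  rw [outBoundary_compl]
  exact hE.image _

theorem ncard_add_ncard_le_of_union_subset_of_inter_subset {α : Type*} {s t u v : Set α}
    (hs : s.Finite) (ht : t.Finite) (hunion : u ∪ v ⊆ s ∪ t) (hinter : u ∩ v ⊆ s ∩ t) :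
    u.ncard + v.ncard ≤ s.ncard + t.ncard := by
  have hst := hs.union ht
  rw [← Set.ncard_union_add_ncard_inter u v (hst.subset (Set.subset_union_left.trans hunion))
    (hst.subset (Set.subset_union_right.trans hunion)), ← Set.ncard_union_add_ncard_inter s t hs ht]
  exact add_le_add (Set.ncard_le_ncard hunion hst)
    (Set.ncard_le_ncard hinter (hs.subset Set.inter_subset_left))

theorem ncard_outBoundary_inter_add_le (hE : (outBoundary Γ E).Finite)
    (hF : (outBoundary Γ F).Finite) :
    (outBoundary Γ (E ∩ F)).ncard + (outBoundary Γ (Eᶜ ∩ Fᶜ)).ncard ≤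
      (outBoundary Γ E).ncard + (outBoundary Γ F).ncard := by
  rw [← Set.compl_union, ncard_outBoundary_compl]
  refine ncard_add_ncard_le_of_union_subset_of_inter_subset hE hF ?_ ?_ <;>
  · rintro ⟨x, y⟩ h
    simp only [outBoundary, Set.mem_union, Set.mem_inter_iff, Set.mem_ofPred_eq] at h ⊢
    tauto

theorem nonempty_outBoundary_of_reachable (h : Γ.Reachable x y) (hx : x ∈ E) (hy : y ∉ E) :
    (outBoundary Γ E).Nonempty := by
  obtain ⟨d, -, hd⟩ := h.some.exists_boundary_dart E hx hy
  exact ⟨d.toProd, d.adj, hd⟩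

theorem exists_mem_outBoundary_of_preconnected_induce (hD : (Γ.induce D).Preconnected)
    (hne : (E ∩ D).Nonempty) (hne' : (Eᶜ ∩ D).Nonempty) : ∃ p ∈ outBoundary Γ E, p.1 ∈ D := by
  obtain ⟨x, hxE, hxD⟩ := hne
  obtain ⟨y, hyE, hyD⟩ := hne'
  obtain ⟨⟨a, b⟩, hab, haE, hbE⟩ := nonempty_outBoundary_of_reachable (E := Subtype.val ⁻¹' E)
    (hD ⟨x, hxD⟩ ⟨y, hyD⟩) hxE hyE
  exact ⟨(a, b), ⟨hab, haE, hbE⟩, a.2⟩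

/-- A cut with at most `k` edges both of whose sides are connected. -/
structure IsTightCut (Γ : SimpleGraph X) (k : ℕ) (E : Set X) : Prop where
  preconnected : (Γ.induce E).Preconnected
  preconnected_compl : (Γ.induce Eᶜ).Preconnected
  finite_outBoundary : (outBoundary Γ E).Finite
  ncard_outBoundary_le : (outBoundary Γ E).ncard ≤ k

theorem induce_deleteEdges_singleton (Γ : SimpleGraph X) (h : ¬ (x ∈ E ∧ y ∈ E)) :
    (Γ.deleteEdges {s(x, y)}).induce E = Γ.induce E := by
  ext ⟨a, ha⟩ ⟨b, hb⟩
  simp only [SimpleGraph.comap_adj, Function.Embedding.subtype_apply, SimpleGraph.deleteEdges_adj,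
    Set.mem_singleton_iff, Sym2.eq_iff, and_iff_left_iff_imp]
  rintro - (⟨rfl, rfl⟩ | ⟨rfl, rfl⟩)
  · exact h ⟨ha, hb⟩
  · exact h ⟨hb, ha⟩

theorem IsTightCut.deleteEdges (hE : IsTightCut Γ (k + 1) E) (hxy : Γ.Adj x y) (hx : x ∈ E)
    (hy : y ∉ E) : IsTightCut (Γ.deleteEdges {s(x, y)}) k E := by
  have hle : outBoundary (Γ.deleteEdges {s(x, y)}) E ⊆ outBoundary Γ E :=
    fun p hp => ⟨Γ.deleteEdges_le _ hp.1, hp.2⟩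
  have hlt : outBoundary (Γ.deleteEdges {s(x, y)}) E ⊂ outBoundary Γ E :=
    (Set.ssubset_iff_of_subset hle).2
      ⟨(x, y), ⟨hxy, hx, hy⟩, fun h => (SimpleGraph.deleteEdges_adj.1 h.1).2 rfl⟩
  refine ⟨?_, ?_, hE.finite_outBoundary.subset hlt.subset, ?_⟩
  · rw [induce_deleteEdges_singleton Γ fun h => hy h.2]
    exact hE.preconnected
  · rw [induce_deleteEdges_singleton Γ fun h : x ∈ Eᶜ ∧ y ∈ Eᶜ => h.1 hx]
    exact hE.preconnected_compl
  · have := Set.ncard_lt_ncard hlt hE.finite_outBoundary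
    have := hE.ncard_outBoundary_le
    omega

theorem IsTightCut.eq_setOf_reachable (hE : IsTightCut Γ k E) (hxy : ¬ Γ.Reachable x y)
    (hx : x ∈ E) (hy : y ∉ E) : E = {z | Γ.Reachable x z} := by
  ext z
  refine ⟨fun hz => (hE.preconnected ⟨x, hx⟩ ⟨z, hz⟩).map (SimpleGraph.Embedding.induce E).toHom,
    fun hxz => by_contra fun hz => hxy (hxz.trans ?_)⟩
  exact (hE.preconnected_compl ⟨z, hz⟩ ⟨y, hy⟩).map (SimpleGraph.Embedding.induce Eᶜ).toHom

theorem finite_separating_of_reachable {p : Set X → Prop}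
    (h : ∀ x y, Γ.Adj x y → {E | p E ∧ x ∈ E ∧ y ∉ E}.Finite) (hxy : Γ.Reachable x y) :
    {E | p E ∧ x ∈ E ∧ y ∉ E}.Finite := by
  obtain ⟨w⟩ := hxy
  induction w with
  | nil => exact Set.finite_empty.subset fun E hE => hE.2.2 hE.2.1
  | @cons a b c hab _ ih =>
    refine (ih.union (h a b hab)).subset fun E hE => ?_
    by_cases hb : b ∈ E
    · exact Or.inl ⟨hE.1, hb, hE.2.2⟩
    · exact Or.inr ⟨hE.1, hE.2.1, hb⟩

-- Deleting an edge `xy` of the boundary lowers `k`; if it disconnects `x` from `y`, then `E` is the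
-- component of `x`.
theorem finite_isTightCut_of_reachable (hxy : Γ.Reachable x y) :
    {E | IsTightCut Γ k E ∧ x ∈ E ∧ y ∉ E}.Finite := by
  induction k generalizing Γ x y with
  | zero =>
    refine Set.finite_empty.subset fun E ⟨hE, hx, hy⟩ => ?_
    have := (Set.ncard_pos hE.finite_outBoundary).2 (nonempty_outBoundary_of_reachable hxy hx hy)
    have := hE.ncard_outBoundary_le
    omega
  | succ k ih =>
    refine finite_separating_of_reachable (fun x y hadj => ?_) hxy
    by_cases hreach : (Γ.deleteEdges {s(x, y)}).Reachable x y
    · exact (ih hreach).subset fun E hE => ⟨hE.1.deleteEdges hadj hE.2.1 hE.2.2, hE.2⟩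
    · exact (Set.finite_singleton _).subset fun E hE =>
        (hE.1.deleteEdges hadj hE.2.1 hE.2.2).eq_setOf_reachable hreach hE.2.1 hE.2.2

/-- Two cuts cross if all four of their corners are nonempty. -/
def Cross (E F : Set X) : Prop :=
  (E ∩ F).Nonempty ∧ (E ∩ Fᶜ).Nonempty ∧ (Eᶜ ∩ F).Nonempty ∧ (Eᶜ ∩ Fᶜ).Nonempty

theorem cross_comm : Cross E F ↔ Cross F E := by
  simp only [Cross, Set.inter_comm E, Set.inter_comm Eᶜ]
  tauto

theorem cross_compl_left : Cross Eᶜ F ↔ Cross E F := by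
  simp only [Cross, _root_.compl_compl]
  tauto

theorem cross_compl_right : Cross E Fᶜ ↔ Cross E F := by
  rw [cross_comm, cross_compl_left, cross_comm]

theorem finite_isTightCut_cross (hΓ : Γ.Preconnected) (k : ℕ) (hE : (outBoundary Γ E).Finite) :
    {D | IsTightCut Γ k D ∧ Cross E D}.Finite := by
  refine (hE.biUnion fun p _ => hE.biUnion fun q _ =>
    finite_isTightCut_of_reachable (k := k) (hΓ p.1 q.1)).subset ?_
  rintro D ⟨hD, hED, hED', hED'', hED'''⟩
  obtain ⟨p, hp, hpD⟩ := exists_mem_outBoundary_of_preconnected_induce hD.preconnected hED hED''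
  obtain ⟨q, hq, hqD⟩ :=
    exists_mem_outBoundary_of_preconnected_induce hD.preconnected_compl hED' hED'''
  exact Set.mem_biUnion hp (Set.mem_biUnion hq ⟨hD, hpD, hqD⟩)

end Cuts

/-! ### Optimal cuts -/

section Minimizers

open scoped Pointwise

variable {α β : Type*} {f : α → β} {s : Set α} {a : α}

/-- The elements of `s` at which `f` attains its minimum over `s`. -/
def minimizers [Preorder β] (f : α → β) (s : Set α) : Set α := {a ∈ s | IsMinOn f s a}

theorem le_of_mem_minimizers [Preorder β] (ha : a ∈ minimizers f s) {b : α} (hb : b ∈ s) :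
    f a ≤ f b :=
  isMinOn_iff.1 ha.2 b hb

theorem nonempty_minimizers [LinearOrder β] [WellFoundedLT β] (hs : s.Nonempty) :
    (minimizers f s).Nonempty :=
  ⟨Function.argminOn f s hs, Function.argminOn_mem f s hs,
    isMinOn_iff.2 fun _ hb => Function.argminOn_le f s hb⟩

theorem apply_mem_minimizers [Preorder β] {t : Set α} (e : Equiv.Perm α)
    (hf : ∀ b, f (e b) = f b) (hs : ∀ b, e b ∈ t ↔ b ∈ s) (ha : a ∈ minimizers f s) :
    e a ∈ minimizers f t := by
  refine ⟨(hs a).2 ha.1, isMinOn_iff.2 fun b hb => ?_⟩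
  obtain ⟨c, rfl⟩ := e.surjective b
  rw [hf, hf]
  exact le_of_mem_minimizers ha ((hs c).1 hb)

theorem smul_minimizers_subset {G : Type*} [Group G] [MulAction G α] [Preorder β] {g : G}
    (hf : ∀ b, f (g • b) = f b) : g • minimizers f s ⊆ minimizers f (g • s) :=
  Set.smul_set_subset_iff.2 fun _ ha =>
    apply_mem_minimizers (MulAction.toPerm g) hf (fun _ => Set.smul_mem_smul_set_iff) ha

end Minimizers

section OptimalCuts

variable {X : Type*} {Γ : SimpleGraph X} {𝔖 : Set (Set (Set X))} {𝒮 𝒯 : Set (Set X)}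
  {C D E F : Set X} {K : ℕ}

/-- An abstraction of the collection of all sets with finite boundary that separate two given ends
of the graph. -/
structure IsCutClass (Γ : SimpleGraph X) (𝒮 : Set (Set X)) : Prop where
  finite_outBoundary : ∀ E ∈ 𝒮, (outBoundary Γ E).Finite
  compl_mem : ∀ E ∈ 𝒮, Eᶜ ∈ 𝒮
  nonempty : ∀ E ∈ 𝒮, E.Nonempty
  inter_mem_or : ∀ C ∈ 𝒮, ∀ D, (outBoundary Γ D).Finite → C ∩ D ∈ 𝒮 ∨ C ∩ Dᶜ ∈ 𝒮

/-- The members of `𝒮` with the least number of boundary edges. -/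
abbrev minCuts (Γ : SimpleGraph X) (𝒮 : Set (Set X)) : Set (Set X) :=
  minimizers (fun E => (outBoundary Γ E).ncard) 𝒮

theorem exists_subset_not_adj_of_not_preconnected_induce (h : ¬ (Γ.induce E).Preconnected) :
    ∃ B ⊆ E, B.Nonempty ∧ (E ∩ Bᶜ).Nonempty ∧ ∀ x ∈ B, ∀ y ∈ E ∩ Bᶜ, ¬ Γ.Adj x y := by
  simp only [SimpleGraph.Preconnected, not_forall] at h
  obtain ⟨u, v, huv⟩ := h
  have hv : v.1 ∉ Subtype.val '' {w | (Γ.induce E).Reachable u w} :=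
    fun h => huv ((Subtype.val_injective.mem_set_image).1 h)
  refine ⟨Subtype.val '' {w | (Γ.induce E).Reachable u w}, Subtype.coe_image_subset _ _,
    ⟨u, u, SimpleGraph.Reachable.refl u, rfl⟩, ⟨v, v.2, hv⟩, ?_⟩
  rintro _ ⟨w, hw, rfl⟩ y ⟨hyE, hy⟩ hwy
  have hadj : (Γ.induce E).Adj w ⟨y, hyE⟩ := hwy
  exact hy ⟨⟨y, hyE⟩, hw.trans hadj.reachable, rfl⟩

theorem outBoundary_subset_of_not_adj {B : Set X} (hBE : B ⊆ E)
    (h : ∀ x ∈ B, ∀ y ∈ E ∩ Bᶜ, ¬ Γ.Adj x y) : outBoundary Γ B ⊆ outBoundary Γ E :=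
  fun p hp => ⟨hp.1, hBE hp.2.1, fun hE => h p.1 hp.2.1 p.2 ⟨hE, hp.2.2⟩ hp.1⟩

theorem IsCutClass.outBoundary_eq_of_subset (h𝒮 : IsCutClass Γ 𝒮) (hE : E ∈ minCuts Γ 𝒮)
    (hF : F ∈ 𝒮) (hsub : outBoundary Γ F ⊆ outBoundary Γ E) : outBoundary Γ F = outBoundary Γ E :=
  Set.eq_of_subset_of_ncard_le hsub (le_of_mem_minimizers hE hF) (h𝒮.finite_outBoundary E hE.1)

-- Otherwise `E` is a disjoint union of two nonempty parts whose boundaries partition that of `E`,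
-- and one of the parts is again a cut of the class.
theorem IsCutClass.preconnected_induce (h𝒮 : IsCutClass Γ 𝒮) (hΓ : Γ.Preconnected)
    (hE : E ∈ minCuts Γ 𝒮) : (Γ.induce E).Preconnected := by
  by_contra hcon
  obtain ⟨B, hBE, ⟨b, hb⟩, ⟨c, hcE, hcB⟩, hadj⟩ :=
    exists_subset_not_adj_of_not_preconnected_induce hcon
  obtain ⟨w, hw⟩ := h𝒮.nonempty _ (h𝒮.compl_mem E hE.1)
  have hsub : outBoundary Γ B ⊆ outBoundary Γ E := outBoundary_subset_of_not_adj hBE hadj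
  have hsub' : outBoundary Γ (E ∩ Bᶜ) ⊆ outBoundary Γ E :=
    outBoundary_subset_of_not_adj Set.inter_subset_left fun x hx y hy hxy =>
      hadj y (by_contra fun hyB => hy.2 ⟨hy.1, hyB⟩) x hx hxy.symm
  have hdisj : Disjoint (outBoundary Γ B) (outBoundary Γ (E ∩ Bᶜ)) :=
    Set.disjoint_left.2 fun p hp hp' => hp'.2.1.2 hp.2.1
  rcases h𝒮.inter_mem_or E hE.1 B ((h𝒮.finite_outBoundary E hE.1).subset hsub) with h | h
  · rw [Set.inter_eq_right.2 hBE] at h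
    obtain ⟨p, hp⟩ := nonempty_outBoundary_of_reachable (hΓ c w)
      (E := E ∩ Bᶜ) ⟨hcE, hcB⟩ fun h => hw h.1
    rw [h𝒮.outBoundary_eq_of_subset hE h hsub] at hdisj
    exact Set.disjoint_left.1 hdisj (hsub' hp) hp
  · obtain ⟨p, hp⟩ := nonempty_outBoundary_of_reachable (hΓ b c) hb hcB
    rw [h𝒮.outBoundary_eq_of_subset hE h hsub'] at hdisj
    exact Set.disjoint_left.1 hdisj hp (hsub hp)

theorem IsCutClass.compl_mem_minimizers {β : Type*} [Preorder β] {f : Set X → β}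
    (hf : ∀ F, f Fᶜ = f F) (h𝒮 : IsCutClass Γ 𝒮) (hE : E ∈ minimizers f 𝒮) :
    Eᶜ ∈ minimizers f 𝒮 :=
  apply_mem_minimizers (Function.Involutive.toPerm _ _root_.compl_involutive) hf
    (fun F => ⟨fun h => _root_.compl_compl F ▸ h𝒮.compl_mem _ h, h𝒮.compl_mem F⟩) hE

/-- A collection of cut classes of a connected graph, each of which contains a cut with at most `K`
edges. -/
structure IsCutSystem (Γ : SimpleGraph X) (𝔖 : Set (Set (Set X))) (K : ℕ) : Prop where
  preconnected : Γ.Preconnected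
  isCutClass : ∀ 𝒮 ∈ 𝔖, IsCutClass Γ 𝒮
  exists_ncard_le : ∀ 𝒮 ∈ 𝔖, ∃ E ∈ 𝒮, (outBoundary Γ E).ncard ≤ K

theorem IsCutSystem.isTightCut (h𝔖 : IsCutSystem Γ 𝔖 K) (h𝒮 : 𝒮 ∈ 𝔖) (hE : E ∈ minCuts Γ 𝒮) :
    IsTightCut Γ K E := by
  have hclass := h𝔖.isCutClass 𝒮 h𝒮
  obtain ⟨F, hF, hFK⟩ := h𝔖.exists_ncard_le 𝒮 h𝒮
  exact ⟨hclass.preconnected_induce h𝔖.preconnected hE,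
    hclass.preconnected_induce h𝔖.preconnected
      (hclass.compl_mem_minimizers (ncard_outBoundary_compl Γ) hE),
    hclass.finite_outBoundary E hE.1, (le_of_mem_minimizers hE hF).trans hFK⟩

/-- The minimal cuts of the system that cross `E`. -/
def crossings (Γ : SimpleGraph X) (𝔖 : Set (Set (Set X))) (E : Set X) : Set (Set X) :=
  {B | (∃ 𝒮 ∈ 𝔖, B ∈ minCuts Γ 𝒮) ∧ Cross E B}

theorem crossings_compl (Γ : SimpleGraph X) (𝔖 : Set (Set (Set X))) (E : Set X) :
    crossings Γ 𝔖 Eᶜ = crossings Γ 𝔖 E := by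
  simp only [crossings, cross_compl_left]

theorem IsCutSystem.finite_crossings (h𝔖 : IsCutSystem Γ 𝔖 K) (hE : (outBoundary Γ E).Finite) :
    (crossings Γ 𝔖 E).Finite := by
  refine (finite_isTightCut_cross h𝔖.preconnected K hE).subset ?_
  rintro B ⟨⟨𝒮, h𝒮, hB⟩, hEB⟩
  exact ⟨h𝔖.isTightCut h𝒮 hB, hEB⟩

theorem Cross.of_inter {B : Set X} (hCD : Cross C D) (h : Cross (C ∩ D) B) :
    Cross C B ∨ Cross D B := by
  have hmono {S T : Set X} (hST : S ⊆ T) (U : Set X) : (S ∩ U).Nonempty → (T ∩ U).Nonempty :=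
    Set.Nonempty.mono (Set.inter_subset_inter_left U hST)
  obtain ⟨hB, hB', ⟨u, hu, huB⟩, ⟨t, ht, htB⟩⟩ := h
  obtain ⟨-, -, -, q, hqC, hqD⟩ := hCD
  suffices ((Cᶜ ∩ B).Nonempty ∧ (Cᶜ ∩ Bᶜ).Nonempty) ∨ (Dᶜ ∩ B).Nonempty ∧ (Dᶜ ∩ Bᶜ).Nonempty from
    this.imp
      (fun h => ⟨hmono Set.inter_subset_left B hB, hmono Set.inter_subset_left Bᶜ hB', h⟩)
      (fun h => ⟨hmono Set.inter_subset_right B hB, hmono Set.inter_subset_right Bᶜ hB', h⟩)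
  rw [Set.compl_inter] at hu ht
  by_cases hqB : q ∈ B
  · exact ht.imp (fun ht => ⟨⟨q, hqC, hqB⟩, t, ht, htB⟩) fun ht => ⟨⟨q, hqD, hqB⟩, t, ht, htB⟩
  · exact hu.imp (fun hu => ⟨⟨u, hu, huB⟩, q, hqC, hqB⟩) fun hu => ⟨⟨u, hu, huB⟩, q, hqD, hqB⟩

theorem not_cross_of_subset (h : C ⊆ D) : ¬ Cross C D :=
  fun hCD => Set.inter_compl_nonempty_iff.1 hCD.2.1 h

theorem crossings_inter_union_subset (hCD : Cross C D) :
    crossings Γ 𝔖 (C ∩ D) ∪ crossings Γ 𝔖 (Cᶜ ∩ Dᶜ) ⊆ crossings Γ 𝔖 C ∪ crossings Γ 𝔖 D := by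
  rintro B (⟨hB, h⟩ | ⟨hB, h⟩)
  · exact (hCD.of_inter h).imp (⟨hB, ·⟩) (⟨hB, ·⟩)
  · rw [← crossings_compl Γ 𝔖 C, ← crossings_compl Γ 𝔖 D]
    exact ((cross_compl_left.2 (cross_compl_right.2 hCD)).of_inter h).imp (⟨hB, ·⟩) (⟨hB, ·⟩)

theorem crossings_inter_inter_subset (C D : Set X) :
    crossings Γ 𝔖 (C ∩ D) ∩ crossings Γ 𝔖 (Cᶜ ∩ Dᶜ) ⊆ crossings Γ 𝔖 C ∩ crossings Γ 𝔖 D := by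
  have hmono {S T U : Set X} (hST : S ⊆ T) : (S ∩ U).Nonempty → (T ∩ U).Nonempty :=
    Set.Nonempty.mono (Set.inter_subset_inter_left U hST)
  rintro B ⟨⟨hB, h, h', -, -⟩, ⟨-, k, k', -, -⟩⟩
  exact ⟨⟨hB, hmono Set.inter_subset_left h, hmono Set.inter_subset_left h',
      hmono Set.inter_subset_left k, hmono Set.inter_subset_left k'⟩,
    ⟨hB, hmono Set.inter_subset_right h, hmono Set.inter_subset_right h',
      hmono Set.inter_subset_right k, hmono Set.inter_subset_right k'⟩⟩

theorem IsCutSystem.ncard_crossings_inter_add_lt (h𝔖 : IsCutSystem Γ 𝔖 K)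
    (hC : (outBoundary Γ C).Finite) (h𝒮 : 𝒮 ∈ 𝔖) (hD : D ∈ minCuts Γ 𝒮) (hCD : Cross C D) :
    (crossings Γ 𝔖 (C ∩ D)).ncard + (crossings Γ 𝔖 (Cᶜ ∩ Dᶜ)).ncard <
      (crossings Γ 𝔖 C).ncard + (crossings Γ 𝔖 D).ncard := by
  have hfinC := h𝔖.finite_crossings hC
  have hfinD := h𝔖.finite_crossings ((h𝔖.isCutClass 𝒮 h𝒮).finite_outBoundary D hD.1)
  have hDC : D ∈ crossings Γ 𝔖 C := ⟨⟨𝒮, h𝒮, hD⟩, hCD⟩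
  have hDCD : D ∉ crossings Γ 𝔖 (C ∩ D) ∪ crossings Γ 𝔖 (Cᶜ ∩ Dᶜ) := by
    rintro (h | h)
    · exact not_cross_of_subset Set.inter_subset_right h.2
    · exact not_cross_of_subset Set.inter_subset_right (cross_compl_right.2 h.2)
  have hssub := (Set.ssubset_iff_of_subset (crossings_inter_union_subset hCD)).2
    ⟨D, Or.inl hDC, hDCD⟩
  rw [← Set.ncard_union_add_ncard_inter _ _ hfinC hfinD, ← Set.ncard_union_add_ncard_inter _ _
    ((hfinC.union hfinD).subset (Set.subset_union_left.trans hssub.subset))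
    ((hfinC.union hfinD).subset (Set.subset_union_right.trans hssub.subset))]
  exact add_lt_add_of_lt_of_le (Set.ncard_lt_ncard hssub (hfinC.union hfinD))
    (Set.ncard_le_ncard (crossings_inter_inter_subset C D) (hfinC.subset Set.inter_subset_left))

/-- The number of boundary edges and the number of crossing minimal cuts, compared
lexicographically. -/
noncomputable def cutCost (Γ : SimpleGraph X) (𝔖 : Set (Set (Set X))) (E : Set X) : ℕ ×ₗ ℕ :=
  toLex ((outBoundary Γ E).ncard, (crossings Γ 𝔖 E).ncard)

theorem cutCost_compl (Γ : SimpleGraph X) (𝔖 : Set (Set (Set X))) (E : Set X) :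
    cutCost Γ 𝔖 Eᶜ = cutCost Γ 𝔖 E := by
  rw [cutCost, cutCost, ncard_outBoundary_compl, crossings_compl]

theorem IsCutSystem.cutCost_inter_add_lt (h𝔖 : IsCutSystem Γ 𝔖 K) (hC : (outBoundary Γ C).Finite)
    (h𝒮 : 𝒮 ∈ 𝔖) (hD : D ∈ minCuts Γ 𝒮) (hCD : Cross C D) :
    cutCost Γ 𝔖 (C ∩ D) + cutCost Γ 𝔖 (Cᶜ ∩ Dᶜ) < cutCost Γ 𝔖 C + cutCost Γ 𝔖 D := by
  have hDfin := (h𝔖.isCutClass 𝒮 h𝒮).finite_outBoundary D hD.1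
  simp only [cutCost, ← toLex_add, Prod.Lex.toLex_lt_toLex, Prod.fst_add, Prod.snd_add]
  exact (ncard_outBoundary_inter_add_le hC hDfin).lt_or_eq.imp_right
    (⟨·, h𝔖.ncard_crossings_inter_add_lt hC h𝒮 hD hCD⟩)

/-- The members of `𝒮` of least cost. -/
abbrev optCuts (Γ : SimpleGraph X) (𝔖 : Set (Set (Set X))) (𝒮 : Set (Set X)) : Set (Set X) :=
  minimizers (cutCost Γ 𝔖) 𝒮

theorem optCuts_subset_minCuts : optCuts Γ 𝔖 𝒮 ⊆ minCuts Γ 𝒮 := fun _ hE =>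
  ⟨hE.1, isMinOn_iff.2 fun _ hF =>
    (Prod.Lex.toLex_le_toLex.1 (le_of_mem_minimizers hE hF)).elim le_of_lt fun h => h.1.le⟩

theorem IsCutSystem.compl_mem_optCuts (h𝔖 : IsCutSystem Γ 𝔖 K) (h𝒮 : 𝒮 ∈ 𝔖)
    (hE : E ∈ optCuts Γ 𝔖 𝒮) : Eᶜ ∈ optCuts Γ 𝔖 𝒮 :=
  (h𝔖.isCutClass 𝒮 h𝒮).compl_mem_minimizers (cutCost_compl Γ 𝔖) hE

theorem IsCutSystem.cutCost_inter_add_lt_of_optCuts (h𝔖 : IsCutSystem Γ 𝔖 K) (h𝒮 : 𝒮 ∈ 𝔖)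
    (h𝒯 : 𝒯 ∈ 𝔖) (hC : C ∈ optCuts Γ 𝔖 𝒮) (hD : D ∈ optCuts Γ 𝔖 𝒯) (hCD : Cross C D) :
    cutCost Γ 𝔖 (C ∩ D) + cutCost Γ 𝔖 (Cᶜ ∩ Dᶜ) < cutCost Γ 𝔖 C + cutCost Γ 𝔖 D :=
  h𝔖.cutCost_inter_add_lt ((h𝔖.isCutClass 𝒮 h𝒮).finite_outBoundary C hC.1) h𝒯
    (optCuts_subset_minCuts hD) hCD

theorem IsCutSystem.compl_inter_compl_notMem (h𝔖 : IsCutSystem Γ 𝔖 K) (h𝒮 : 𝒮 ∈ 𝔖) (h𝒯 : 𝒯 ∈ 𝔖)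
    (hC : C ∈ optCuts Γ 𝔖 𝒮) (hD : D ∈ optCuts Γ 𝔖 𝒯) (hCD : Cross C D) (h : C ∩ D ∈ 𝒮) :
    Cᶜ ∩ Dᶜ ∉ 𝒯 := fun h' =>
  (h𝔖.cutCost_inter_add_lt_of_optCuts h𝒮 h𝒯 hC hD hCD).not_ge
    (add_le_add (le_of_mem_minimizers hC h) (le_of_mem_minimizers hD h'))

-- If the class of `C` owns two opposite corners and the class of `D` the other two, then
-- submodularity gives both `2 * cost C < cost C + cost D` and `2 * cost D < cost C + cost D`.
theorem IsCutSystem.inter_notMem_of_cross (h𝔖 : IsCutSystem Γ 𝔖 K) (h𝒮 : 𝒮 ∈ 𝔖) (h𝒯 : 𝒯 ∈ 𝔖)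
    (hC : C ∈ optCuts Γ 𝔖 𝒮) (hD : D ∈ optCuts Γ 𝔖 𝒯) (hCD : Cross C D) : C ∩ D ∉ 𝒮 := by
  intro h
  have hC' := h𝔖.compl_mem_optCuts h𝒮 hC
  have hD' := h𝔖.compl_mem_optCuts h𝒯 hD
  have hCfin := (h𝔖.isCutClass 𝒮 h𝒮).finite_outBoundary C hC.1
  have hDfin := (h𝔖.isCutClass 𝒯 h𝒯).finite_outBoundary D hD.1
  have hCD' : Cross C Dᶜ := cross_compl_right.2 hCD
  have h₁ : Dᶜ ∩ C ∈ 𝒯 := ((h𝔖.isCutClass 𝒯 h𝒯).inter_mem_or _ hD'.1 C hCfin).resolve_right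
    (Set.inter_comm .. ▸ h𝔖.compl_inter_compl_notMem h𝒮 h𝒯 hC hD hCD h)
  have h₂ : Cᶜ ∩ Dᶜ ∈ 𝒮 :=
    ((h𝔖.isCutClass 𝒮 h𝒮).inter_mem_or _ hC'.1 D hDfin).resolve_left fun h' =>
      h𝔖.compl_inter_compl_notMem h𝒯 h𝒮 hD' hC (cross_comm.1 hCD') h₁
        (by rwa [_root_.compl_compl, Set.inter_comm])
  have h₃ : D ∩ Cᶜ ∈ 𝒯 := ((h𝔖.isCutClass 𝒯 h𝒯).inter_mem_or _ hD.1 C hCfin).resolve_left fun h' =>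
    h𝔖.compl_inter_compl_notMem h𝒯 h𝒮 hD hC (cross_comm.1 hCD) h' (by rwa [Set.inter_comm])
  have hlt := h𝔖.cutCost_inter_add_lt_of_optCuts h𝒮 h𝒯 hC hD hCD
  have hlt' := h𝔖.cutCost_inter_add_lt_of_optCuts h𝒮 h𝒯 hC hD' hCD'
  rw [_root_.compl_compl, cutCost_compl] at hlt'
  have hCle := add_le_add (le_of_mem_minimizers hC h) (le_of_mem_minimizers hC h₂)
  have hDle := add_le_add (le_of_mem_minimizers hD h₁) (le_of_mem_minimizers hD h₃)
  rw [Set.inter_comm, Set.inter_comm D] at hDle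
  exact (lt_of_add_lt_add_left (hCle.trans_lt hlt)).not_gt
    (lt_of_add_lt_add_right (hDle.trans_lt hlt'))

theorem IsCutSystem.not_cross (h𝔖 : IsCutSystem Γ 𝔖 K) (h𝒮 : 𝒮 ∈ 𝔖) (h𝒯 : 𝒯 ∈ 𝔖)
    (hC : C ∈ optCuts Γ 𝔖 𝒮) (hD : D ∈ optCuts Γ 𝔖 𝒯) : ¬ Cross C D := fun hCD =>
  ((h𝔖.isCutClass 𝒮 h𝒮).inter_mem_or C hC.1 D
    ((h𝔖.isCutClass 𝒯 h𝒯).finite_outBoundary D hD.1)).elim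
    (h𝔖.inter_notMem_of_cross h𝒮 h𝒯 hC hD hCD)
    (h𝔖.inter_notMem_of_cross h𝒮 h𝒯 hC (h𝔖.compl_mem_optCuts h𝒯 hD) (cross_compl_right.2 hCD))

end OptimalCuts

section Equivariance

open scoped Pointwise

variable {G X : Type*} [Group G] [MulAction G X] {Γ : SimpleGraph X} {𝔖 : Set (Set (Set X))}
  {𝒮 : Set (Set X)} {E F : Set X} {K : ℕ}

theorem outBoundary_smul (hΓ : ∀ (g : G) (x y : X), Γ.Adj (g • x) (g • y) ↔ Γ.Adj x y) (g : G)
    (E : Set X) : outBoundary Γ (g • E) = g • outBoundary Γ E := by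
  ext ⟨x, y⟩
  simp only [outBoundary, Set.mem_smul_set_iff_inv_smul_mem, Set.mem_ofPred_eq, Prod.smul_mk, hΓ]

theorem cross_smul (g : G) : Cross (g • E) (g • F) ↔ Cross E F := by
  simp only [Cross, ← Set.smul_set_compl, ← Set.smul_set_inter, Set.smul_set_nonempty]

theorem ncard_outBoundary_smul (hΓ : ∀ (g : G) (x y : X), Γ.Adj (g • x) (g • y) ↔ Γ.Adj x y)
    (g : G) (E : Set X) : (outBoundary Γ (g • E)).ncard = (outBoundary Γ E).ncard := by
  rw [outBoundary_smul hΓ, Set.ncard_smul_set]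

theorem smul_crossings_subset (hΓ : ∀ (g : G) (x y : X), Γ.Adj (g • x) (g • y) ↔ Γ.Adj x y)
    (h𝔖 : ∀ (g : G), ∀ 𝒮 ∈ 𝔖, g • 𝒮 ∈ 𝔖) (g : G) (E : Set X) :
    g • crossings Γ 𝔖 E ⊆ crossings Γ 𝔖 (g • E) :=
  Set.smul_set_subset_iff.2 fun _ ⟨⟨𝒮, h𝒮, hB⟩, hEB⟩ =>
    ⟨⟨g • 𝒮, h𝔖 g 𝒮 h𝒮, smul_minimizers_subset (ncard_outBoundary_smul hΓ g)
      (Set.smul_mem_smul_set hB)⟩, (cross_smul g).2 hEB⟩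

theorem cutCost_smul (hΓ : ∀ (g : G) (x y : X), Γ.Adj (g • x) (g • y) ↔ Γ.Adj x y)
    (h𝔖 : ∀ (g : G), ∀ 𝒮 ∈ 𝔖, g • 𝒮 ∈ 𝔖) (g : G) (E : Set X) :
    cutCost Γ 𝔖 (g • E) = cutCost Γ 𝔖 E := by
  have hcross : crossings Γ 𝔖 (g • E) = g • crossings Γ 𝔖 E := by
    refine Set.Subset.antisymm (Set.subset_smul_set_iff.2 ?_) (smul_crossings_subset hΓ h𝔖 g E)
    simpa only [inv_smul_smul] using smul_crossings_subset hΓ h𝔖 g⁻¹ (g • E)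
  rw [cutCost, cutCost, ncard_outBoundary_smul hΓ, hcross, Set.ncard_smul_set]

/-- A collection of oriented cuts, closed under reversal, no two of which cross and only finitely
many of which separate two given points. -/
structure IsNestedFamily (𝓔 : Set (Set X)) : Prop where
  compl_mem : ∀ E ∈ 𝓔, Eᶜ ∈ 𝓔
  nonempty : ∀ E ∈ 𝓔, E.Nonempty
  not_cross : ∀ E ∈ 𝓔, ∀ F ∈ 𝓔, ¬ Cross E F
  finite_separators : ∀ x y, (separators 𝓔 x y).Finite

theorem IsCutSystem.isNestedFamily (h𝔖 : IsCutSystem Γ 𝔖 K) :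
    IsNestedFamily (⋃ 𝒮 ∈ 𝔖, optCuts Γ 𝔖 𝒮) := by
  refine ⟨fun E hE => ?_, fun E hE => ?_, fun E hE F hF => ?_, fun x y => ?_⟩
  · obtain ⟨𝒮, h𝒮, hE⟩ := Set.mem_iUnion₂.1 hE
    exact Set.mem_biUnion h𝒮 (h𝔖.compl_mem_optCuts h𝒮 hE)
  · obtain ⟨𝒮, h𝒮, hE⟩ := Set.mem_iUnion₂.1 hE
    exact (h𝔖.isCutClass 𝒮 h𝒮).nonempty E hE.1
  · obtain ⟨𝒮, h𝒮, hE⟩ := Set.mem_iUnion₂.1 hE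
    obtain ⟨𝒯, h𝒯, hF⟩ := Set.mem_iUnion₂.1 hF
    exact h𝔖.not_cross h𝒮 h𝒯 hE hF
  · refine (finite_isTightCut_of_reachable (k := K) (h𝔖.preconnected y x)).subset ?_
    rintro E ⟨hE, hx, hy⟩
    obtain ⟨𝒮, h𝒮, hE⟩ := Set.mem_iUnion₂.1 hE
    exact ⟨h𝔖.isTightCut h𝒮 (optCuts_subset_minCuts hE), hy, hx⟩

theorem IsCutSystem.exists_isNestedFamily (h𝔖 : IsCutSystem Γ 𝔖 K)
    (hΓ : ∀ (g : G) (x y : X), Γ.Adj (g • x) (g • y) ↔ Γ.Adj x y)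
    (hsmul : ∀ (g : G), ∀ 𝒮 ∈ 𝔖, g • 𝒮 ∈ 𝔖) :
    ∃ 𝓔 : Set (Set X), IsNestedFamily 𝓔 ∧ (∀ (g : G), ∀ E ∈ 𝓔, g • E ∈ 𝓔) ∧
      ∀ 𝒮 ∈ 𝔖, (𝓔 ∩ 𝒮).Nonempty := by
  refine ⟨_, h𝔖.isNestedFamily, fun g E hE => ?_, fun 𝒮 h𝒮 => ?_⟩
  · obtain ⟨𝒮, h𝒮, hE⟩ := Set.mem_iUnion₂.1 hE
    exact Set.mem_biUnion (hsmul g 𝒮 h𝒮)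
      (smul_minimizers_subset (cutCost_smul hΓ hsmul g) (Set.smul_mem_smul_set hE))
  · obtain ⟨F, hF, -⟩ := h𝔖.exists_ncard_le 𝒮 h𝒮
    obtain ⟨E, hE⟩ := nonempty_minimizers (f := cutCost Γ 𝔖) ⟨F, hF⟩
    exact ⟨E, Set.mem_biUnion h𝒮 hE, hE.1⟩

end Equivariance

/-! ### The tree dual to a nested family -/

/-- A subset together with a sign. Replacing each member `E` of a nested family by the two signed
sets `(E, false) < (E, true)` subdivides the edges of the dual tree at their midpoints, so that the
group acts without inversions. -/
@[ext]
structure SignedSet (X : Type*) where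
  side : Set X
  sign : Bool

namespace SignedSet

variable {X : Type*} {a b : SignedSet X}

instance : PartialOrder (SignedSet X) :=
  PartialOrder.lift (fun a => toLex (a.side, a.sign)) fun _ _ h =>
    SignedSet.ext (congrArg (fun p => (ofLex p).1) h) (congrArg (fun p => (ofLex p).2) h)

theorem le_iff : a ≤ b ↔ a.side ⊂ b.side ∨ a.side = b.side ∧ a.sign ≤ b.sign :=
  Prod.Lex.toLex_le_toLex

instance : Compl (SignedSet X) := ⟨fun a => ⟨a.sideᶜ, !a.sign⟩⟩

@[simp] theorem side_compl (a : SignedSet X) : aᶜ.side = a.sideᶜ := rfl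

@[simp] protected theorem compl_compl (a : SignedSet X) : aᶜᶜ = a :=
  SignedSet.ext (_root_.compl_compl _) (Bool.not_not _)

protected theorem compl_le_compl (h : a ≤ b) : bᶜ ≤ aᶜ := by
  rw [le_iff] at h ⊢
  exact h.imp compl_lt_compl_iff_lt.2 fun ⟨hside, hsign⟩ => ⟨congrArg compl hside.symm,
    (by decide : ∀ s t : Bool, s ≤ t → (!t) ≤ !s) _ _ hsign⟩

theorem side_subset_of_le (h : a ≤ b) : a.side ⊆ b.side :=
  (le_iff.1 h).elim subset_of_ssubset fun h' => h'.1.subset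

theorem le_or_le_of_side_subset (h : a.side ⊆ b.side) : a ≤ b ∨ b ≤ a := by
  rcases h.eq_or_ssubset with hside | hside
  · exact (le_total a.sign b.sign).imp (fun hsign => le_iff.2 (Or.inr ⟨hside, hsign⟩))
      fun hsign => le_iff.2 (Or.inr ⟨hside.symm, hsign⟩)
  · exact Or.inl (le_iff.2 (Or.inl hside))

theorem not_le_compl (h : a.side.Nonempty) : ¬ a ≤ aᶜ := fun hle =>
  let ⟨_, hx⟩ := h
  side_subset_of_le hle hx hx

theorem nested_of_not_cross (h : ¬ Cross a.side b.side) :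
    a ≤ b ∨ a ≤ bᶜ ∨ aᶜ ≤ b ∨ aᶜ ≤ bᶜ := by
  have hle {c d : SignedSet X} (hcd : ¬ (c.side ∩ d.sideᶜ).Nonempty) : c ≤ d ∨ cᶜ ≤ dᶜ :=
    (le_or_le_of_side_subset fun x hx => by_contra fun hxd => hcd ⟨x, hx, hxd⟩).imp_right
      SignedSet.compl_le_compl
  simp only [Cross, not_and_or] at h
  rcases h with h | h | h | h
  · simpa using (hle (d := bᶜ) (by simpa using h)).elim (Or.inr ∘ Or.inl)
      (Or.inr ∘ Or.inr ∘ Or.inl)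
  · exact (hle h).imp_right (Or.inr ∘ Or.inr)
  · have := hle (c := aᶜ) (d := bᶜ) (by simpa using h)
    rw [SignedSet.compl_compl, SignedSet.compl_compl] at this
    exact this.elim (Or.inr ∘ Or.inr ∘ Or.inr) Or.inl
  · have := hle (c := aᶜ) h
    rw [SignedSet.compl_compl] at this
    exact this.elim (Or.inr ∘ Or.inr ∘ Or.inl) (Or.inr ∘ Or.inl)

section Action

open scoped Pointwise

variable {G : Type*} [Group G] [MulAction G X]

instance : MulAction G (SignedSet X) where
  smul g a := ⟨g • a.side, a.sign⟩
  one_smul a := SignedSet.ext (one_smul G a.side) rfl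
  mul_smul g h a := SignedSet.ext (mul_smul g h a.side) rfl

@[simp] theorem side_smul (g : G) (a : SignedSet X) : (g • a).side = g • a.side := rfl

protected theorem smul_compl (g : G) (a : SignedSet X) : g • aᶜ = (g • a)ᶜ :=
  SignedSet.ext Set.smul_set_compl rfl

theorem smul_ne_compl (g : G) (a : SignedSet X) : g • a ≠ aᶜ := fun h =>
  Bool.not_ne_self a.sign (congrArg sign h).symm

theorem smul_le_smul (g : G) (h : a ≤ b) : g • a ≤ g • b := by
  rw [le_iff] at h ⊢
  exact h.imp (fun hlt => ⟨Set.smul_set_mono hlt.1, fun hle => hlt.2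
    (Set.smul_set_subset_smul_set_iff.1 hle)⟩) fun ⟨hside, hsign⟩ => ⟨congrArg (g • ·) hside, hsign⟩

end Action

end SignedSet

section Dual

variable {X : Type*} {𝓔 : Set (Set X)} {σ τ : Set (SignedSet X)} {a b : SignedSet X} {x y : X}

/-- A choice of one side of every (doubled) member of `𝓔`, closed under passing to larger sides.
Orientations are the vertices, including those at infinity, of the tree dual to `𝓔`. -/
structure IsOrientation (𝓔 : Set (Set X)) (σ : Set (SignedSet X)) : Prop where
  side_mem : ∀ a ∈ σ, a.side ∈ 𝓔
  compl_mem_iff : ∀ a, a.side ∈ 𝓔 → (aᶜ ∈ σ ↔ a ∉ σ)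
  mem_of_le : ∀ a ∈ σ, ∀ b, b.side ∈ 𝓔 → a ≤ b → b ∈ σ

/-- The orientation pointing towards `x`. -/
def principalOrientation (𝓔 : Set (Set X)) (x : X) : Set (SignedSet X) :=
  {a | a.side ∈ 𝓔 ∧ x ∈ a.side}

theorem isOrientation_principalOrientation (h𝓔 : IsNestedFamily 𝓔) (x : X) :
    IsOrientation 𝓔 (principalOrientation 𝓔 x) where
  side_mem _ ha := ha.1
  compl_mem_iff a ha := by simp [principalOrientation, ha, h𝓔.compl_mem a.side ha]
  mem_of_le a ha b hb hab := ⟨hb, SignedSet.side_subset_of_le hab ha.2⟩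

theorem finite_principalOrientation_diff (h𝓔 : IsNestedFamily 𝓔) (x y : X) :
    (principalOrientation 𝓔 x \ principalOrientation 𝓔 y).Finite := by
  refine Set.Finite.subset (((h𝓔.finite_separators y x).prod (Set.toFinite Set.univ)).image
    fun p => (⟨p.1, p.2⟩ : SignedSet X)) ?_
  rintro a ⟨⟨ha, hx⟩, hy⟩
  exact ⟨(a.side, a.sign), ⟨⟨ha, fun h => hy ⟨ha, h⟩, hx⟩, trivial⟩, rfl⟩

/-- The head of the oriented edge `a` of the tree dual to `𝓔`. -/
def headOrientation (𝓔 : Set (Set X)) (a : SignedSet X) : Set (SignedSet X) :=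
  {b | b.side ∈ 𝓔 ∧ (a ≤ b ∨ aᶜ < b)}

theorem isOrientation_headOrientation (h𝓔 : IsNestedFamily 𝓔) (ha : a.side ∈ 𝓔) :
    IsOrientation 𝓔 (headOrientation 𝓔 a) where
  side_mem _ hb := hb.1
  compl_mem_iff b hb := by
    have hnot (c : SignedSet X) (hc : c.side ∈ 𝓔) : ¬ c ≤ cᶜ :=
      SignedSet.not_le_compl (h𝓔.nonempty _ hc)
    have hac : ¬ aᶜ ≤ a := by simpa using hnot aᶜ (h𝓔.compl_mem _ ha)
    constructor
    · rintro ⟨-, h | h⟩ ⟨-, h' | h'⟩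
      · exact hnot a ha (h.trans (SignedSet.compl_le_compl h'))
      · exact (h'.trans_le (by simpa using SignedSet.compl_le_compl h)).false
      · exact (h.trans_le (SignedSet.compl_le_compl h')).false
      · exact hac (h.le.trans (by simpa using SignedSet.compl_le_compl h'.le))
    · intro h
      have h₁ : ¬ a ≤ b := fun h' => h ⟨hb, Or.inl h'⟩
      have h₂ : ¬ aᶜ < b := fun h' => h ⟨hb, Or.inr h'⟩
      refine ⟨h𝓔.compl_mem _ hb, ?_⟩
      rcases SignedSet.nested_of_not_cross (h𝓔.not_cross _ ha _ hb) with h' | h' | h' | h'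
      · exact absurd h' h₁
      · exact Or.inl h'
      · rw [← h'.eq_of_not_lt h₂, SignedSet.compl_compl]
        exact Or.inl le_rfl
      · refine Or.inr (h'.lt_of_ne fun heq => h₁ ?_)
        rw [← SignedSet.compl_compl a, heq, SignedSet.compl_compl]
  mem_of_le b hb c hc hbc := ⟨hc, hb.2.imp (·.trans hbc) (·.trans_le hbc)⟩

theorem finite_headOrientation_diff (h𝓔 : IsNestedFamily 𝓔) (ha : a.side ∈ 𝓔) (x : X) :
    (headOrientation 𝓔 a \ principalOrientation 𝓔 x).Finite := by
  obtain ⟨y, hy⟩ := h𝓔.nonempty _ ha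
  obtain ⟨z, hz⟩ := h𝓔.nonempty _ (h𝓔.compl_mem _ ha)
  refine ((finite_principalOrientation_diff h𝓔 y x).union
    (finite_principalOrientation_diff h𝓔 z x)).subset ?_
  rintro b ⟨⟨hb, hab | hab⟩, hx⟩
  · exact Or.inl ⟨⟨hb, SignedSet.side_subset_of_le hab hy⟩, hx⟩
  · exact Or.inr ⟨⟨hb, SignedSet.side_subset_of_le hab.le hz⟩, hx⟩

theorem mem_headOrientation_diff_iff (h𝓔 : IsNestedFamily 𝓔) (ha : a.side ∈ 𝓔) :
    b ∈ headOrientation 𝓔 a \ headOrientation 𝓔 aᶜ ↔ b = a := by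
  constructor
  · rintro ⟨⟨hb, h⟩, hc⟩
    have h₁ : ¬ aᶜ ≤ b := fun h' => hc ⟨hb, Or.inl h'⟩
    have h₂ : ¬ a < b := fun h' => hc ⟨hb, Or.inr (by rwa [SignedSet.compl_compl])⟩
    exact ((h.resolve_right fun h' => h₁ h'.le).eq_of_not_lt h₂).symm
  · rintro rfl
    refine ⟨⟨ha, Or.inl le_rfl⟩, ?_⟩
    rintro ⟨-, h | h⟩
    · exact SignedSet.not_le_compl (h𝓔.nonempty _ (h𝓔.compl_mem _ ha))
        (by rwa [SignedSet.compl_compl])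
    · exact (h.trans_eq' (SignedSet.compl_compl b)).false

section Action

open scoped Pointwise

variable {G : Type*} [Group G] [MulAction G X]

theorem smul_principalOrientation (h𝓔 : ∀ (g : G), ∀ E ∈ 𝓔, g • E ∈ 𝓔) (g : G) (x : X) :
    g • principalOrientation 𝓔 x = principalOrientation 𝓔 (g • x) := by
  ext a
  rw [Set.mem_smul_set_iff_inv_smul_mem]
  refine and_congr ⟨fun h => ?_, h𝓔 _ _⟩ Set.mem_inv_smul_set_iff
  simpa using h𝓔 g _ h

theorem IsOrientation.smul (h𝓔 : ∀ (g : G), ∀ E ∈ 𝓔, g • E ∈ 𝓔) (hσ : IsOrientation 𝓔 σ) (g : G) :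
    IsOrientation 𝓔 (g • σ) where
  side_mem a ha := by
    rw [Set.mem_smul_set_iff_inv_smul_mem] at ha
    simpa using h𝓔 g _ (hσ.side_mem _ ha)
  compl_mem_iff a ha := by
    rw [Set.mem_smul_set_iff_inv_smul_mem, Set.mem_smul_set_iff_inv_smul_mem, SignedSet.smul_compl]
    exact hσ.compl_mem_iff _ (h𝓔 _ _ ha)
  mem_of_le a ha b hb hab := by
    rw [Set.mem_smul_set_iff_inv_smul_mem] at ha ⊢
    exact hσ.mem_of_le _ ha _ (h𝓔 _ _ hb) (SignedSet.smul_le_smul _ hab)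

/-- The vertices of the tree dual to `𝓔`: the orientations that agree with a principal one up to
finitely many sides. -/
def dualTree (h𝓔 : ∀ (g : G), ∀ E ∈ 𝓔, g • E ∈ 𝓔) : SubMulAction G (Set (SignedSet X)) where
  carrier := {σ | IsOrientation 𝓔 σ ∧ ∀ x, (σ \ principalOrientation 𝓔 x).Finite}
  smul_mem' g σ hσ := by
    refine ⟨hσ.1.smul h𝓔 g, fun x => ?_⟩
    rw [← smul_inv_smul g x, ← smul_principalOrientation h𝓔, ← Set.smul_set_sdiff]
    exact (hσ.2 _).smul_set

variable {h𝓔 : ∀ (g : G), ∀ E ∈ 𝓔, g • E ∈ 𝓔}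

theorem nonempty_dualTree [Nonempty X] (hnest : IsNestedFamily 𝓔) : Nonempty (dualTree h𝓔) :=
  let ⟨x⟩ := ‹Nonempty X›
  ⟨⟨principalOrientation 𝓔 x, isOrientation_principalOrientation hnest x,
    finite_principalOrientation_diff hnest x⟩⟩

variable (h𝓔) in
/-- The half-tree at the head of the oriented edge `a`. -/
def dualHalfTree (a : SignedSet X) : Set (dualTree h𝓔) := {σ | a ∈ σ.1}

variable (h𝓔) in
/-- The half-trees of the tree dual to `𝓔`. -/
def dualHalfTrees : Set (Set (dualTree h𝓔)) := dualHalfTree h𝓔 '' {a | a.side ∈ 𝓔}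

theorem smul_dualHalfTree (g : G) (a : SignedSet X) :
    g • dualHalfTree h𝓔 a = dualHalfTree h𝓔 (g • a) := by
  ext σ
  rw [Set.mem_smul_set_iff_inv_smul_mem]
  exact Set.mem_inv_smul_set_iff

theorem compl_dualHalfTree (ha : a.side ∈ 𝓔) : (dualHalfTree h𝓔 a)ᶜ = dualHalfTree h𝓔 aᶜ :=
  Set.ext fun σ => (σ.2.1.compl_mem_iff a ha).symm

theorem dualHalfTree_subset (hb : b.side ∈ 𝓔) (hab : a ≤ b) :
    dualHalfTree h𝓔 a ⊆ dualHalfTree h𝓔 b :=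
  fun σ ha => σ.2.1.mem_of_le a ha b hb hab

theorem exists_dualTree_edge (hnest : IsNestedFamily 𝓔) (ha : a.side ∈ 𝓔) :
    ∃ σ τ : dualTree h𝓔, ∀ b, σ ∉ dualHalfTree h𝓔 b ∧ τ ∈ dualHalfTree h𝓔 b ↔ b = a :=
  have hac : aᶜ.side ∈ 𝓔 := hnest.compl_mem _ ha
  ⟨⟨_, isOrientation_headOrientation hnest hac, finite_headOrientation_diff hnest hac⟩,
    ⟨_, isOrientation_headOrientation hnest ha, finite_headOrientation_diff hnest ha⟩,
    fun _ => and_comm.trans (mem_headOrientation_diff_iff hnest ha)⟩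

theorem dualHalfTree_injOn (hnest : IsNestedFamily 𝓔) :
    {a | a.side ∈ 𝓔}.InjOn (dualHalfTree h𝓔) := by
  intro a ha b _ hab
  obtain ⟨σ, τ, h⟩ := exists_dualTree_edge (h𝓔 := h𝓔) hnest ha
  exact ((h b).1 (hab ▸ (h a).2 rfl)).symm

theorem finite_separators_dualHalfTrees [Nonempty X] (σ τ : dualTree h𝓔) :
    (separators (dualHalfTrees h𝓔) σ τ).Finite := by
  inhabit X
  refine (((τ.2.2 default).union ((σ.2.2 default).image compl)).image (dualHalfTree h𝓔)).subset ?_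
  rintro _ ⟨⟨a, ha, rfl⟩, hσ, hτ⟩
  refine ⟨a, ?_, rfl⟩
  by_cases h : a ∈ principalOrientation 𝓔 default
  · exact Or.inr ⟨aᶜ, ⟨(σ.2.1.compl_mem_iff a ha).2 hσ, fun h' => h'.2 h.2⟩, a.compl_compl⟩
  · exact Or.inl ⟨hτ, h⟩

theorem isHalfTreeAction_dualHalfTrees [Nonempty X] (hnest : IsNestedFamily 𝓔) :
    IsHalfTreeAction G (dualHalfTrees h𝓔) where
  compl_mem := by
    rintro _ ⟨a, ha, rfl⟩
    exact ⟨aᶜ, hnest.compl_mem _ ha, (compl_dualHalfTree ha).symm⟩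
  nested := by
    rintro _ ⟨a, ha, rfl⟩ _ ⟨b, hb, rfl⟩
    have hbc : bᶜ.side ∈ 𝓔 := hnest.compl_mem _ hb
    rw [compl_dualHalfTree ha, compl_dualHalfTree hb]
    exact (SignedSet.nested_of_not_cross (hnest.not_cross _ ha _ hb)).imp (dualHalfTree_subset hb)
      (Or.imp (dualHalfTree_subset hbc) (Or.imp (dualHalfTree_subset hb)
        (dualHalfTree_subset hbc)))
  finite_separators := finite_separators_dualHalfTrees
  eq_of_separators_eq_empty σ τ h := by
    have hiff (a : SignedSet X) (ha : a.side ∈ 𝓔) : a ∉ σ.1 → a ∉ τ.1 := fun hσ hτ =>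
      (h ▸ ⟨⟨a, ha, rfl⟩, hσ, hτ⟩ : dualHalfTree h𝓔 a ∈ (∅ : Set (Set (dualTree h𝓔))))
    refine Subtype.ext (Set.ext fun a => ⟨fun hσ => ?_, fun hτ => ?_⟩)
    · have ha := σ.2.1.side_mem a hσ
      by_contra hτ
      exact hiff aᶜ (hnest.compl_mem _ ha) (fun h' => (σ.2.1.compl_mem_iff a ha).1 h' hσ)
        ((τ.2.1.compl_mem_iff a ha).2 hτ)
    · exact by_contra fun hσ => hiff a (τ.2.1.side_mem a hτ) hσ hτ
  exists_edge := by
    rintro _ ⟨a, ha, rfl⟩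
    obtain ⟨σ, τ, h⟩ := exists_dualTree_edge (h𝓔 := h𝓔) hnest ha
    refine ⟨σ, τ, Set.eq_singleton_iff_unique_mem.2 ⟨⟨⟨a, ha, rfl⟩, (h a).2 rfl⟩, ?_⟩⟩
    rintro _ ⟨⟨b, -, rfl⟩, hb⟩
    rw [(h b).1 hb]
  smul_mem := by
    rintro g _ ⟨a, ha, rfl⟩
    exact ⟨g • a, h𝓔 g _ ha, (smul_dualHalfTree g a).symm⟩
  smul_ne_compl := by
    rintro g _ ⟨a, ha, rfl⟩ h
    rw [smul_dualHalfTree, compl_dualHalfTree ha] at h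
    exact SignedSet.smul_ne_compl g a
      (dualHalfTree_injOn hnest (h𝓔 g _ ha) (hnest.compl_mem _ ha) h)

theorem finite_orbits_dualHalfTrees (hnest : IsNestedFamily 𝓔) {Γ : SimpleGraph X}
    (hΓ : Γ.Preconnected) {D : Set (X × X)} (hD : D.Finite)
    (hadj : ∀ x y, Γ.Adj x y → ∃ g : G, g • (x, y) ∈ D) :
    (Quotient.mk (MulAction.orbitRel G (Set (dualTree h𝓔))) '' dualHalfTrees h𝓔).Finite := by
  refine (((hD.biUnion fun d _ => finite_principalOrientation_diff hnest d.1 d.2).image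
    (dualHalfTree h𝓔)).image (Quotient.mk _)).subset ?_
  rintro _ ⟨_, ⟨a, ha, rfl⟩, rfl⟩
  obtain ⟨x, hx⟩ := hnest.nonempty _ ha
  obtain ⟨y, hy⟩ := hnest.nonempty _ (hnest.compl_mem _ ha)
  obtain ⟨⟨p, q⟩, hpq, hp, hq⟩ := nonempty_outBoundary_of_reachable (hΓ x y) hx hy
  obtain ⟨g, hg⟩ := hadj p q hpq
  refine ⟨dualHalfTree h𝓔 (g • a), ⟨g • a, Set.mem_biUnion hg ⟨⟨h𝓔 g _ ha, ?_⟩, ?_⟩, rfl⟩, ?_⟩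
  · exact Set.smul_mem_smul_set hp
  · exact fun h => hq (Set.smul_mem_smul_set_iff.1 h.2)
  · exact Quotient.sound ⟨g, smul_dualHalfTree g a⟩

theorem exists_pow_smul_eq_of_frequently_notMem {σ : dualTree h𝓔} {g : G} (hg : g • σ = σ)
    (ha : a ∈ σ.1) (h : ∃ᶠ n : ℕ in Filter.atTop, g⁻¹ ^ n • x ∉ a.side) :
    ∃ m, 0 < m ∧ g ^ m • a = a := by
  have hmaps : Set.MapsTo (fun n => g ^ n • a) {n : ℕ | g⁻¹ ^ n • x ∉ a.side}
      (σ.1 \ principalOrientation 𝓔 x) := fun n hn => by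
    have hgn : g ^ n • σ = σ := Subgroup.pow_mem (MulAction.stabilizer G σ) hg n
    refine ⟨(congrArg Subtype.val hgn).subset (Set.smul_mem_smul_set ha), fun hx => hn ?_⟩
    rw [inv_pow, ← Set.mem_smul_set_iff_inv_smul_mem]
    exact hx.2
  obtain ⟨i, -, j, -, hij, heq⟩ :=
    (Nat.frequently_atTop_iff_infinite.1 h).exists_lt_map_eq_of_mapsTo hmaps (σ.2.2 x)
  refine ⟨j - i, Nat.sub_pos_of_lt hij, smul_left_cancel (g ^ i) ?_⟩
  rw [← mul_smul, ← pow_add, Nat.add_sub_cancel' hij.le]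
  exact heq.symm

theorem pow_smul_set_ne_of_eventually_not_iff {A : Set X} {g : G} {m : ℕ} (hm : 0 < m)
    (h : ∀ᶠ n : ℕ in Filter.atTop, ¬(g ^ n • x ∈ A ↔ g⁻¹ ^ n • x ∈ A)) : g ^ m • A ≠ A := by
  intro hA
  have htendsto : Filter.Tendsto (m * ·) Filter.atTop Filter.atTop :=
    Filter.tendsto_id.const_mul_atTop' hm
  obtain ⟨k, hk⟩ := (htendsto.eventually h).exists
  have hgk : g ^ (m * k) • A = A :=
    pow_mul g m k ▸ Subgroup.pow_mem (MulAction.stabilizer G A) hA k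
  refine hk ?_
  rw [inv_pow, ← Set.mem_smul_set_iff_inv_smul_mem, hgk]
  nth_rw 1 [← hgk]
  exact Set.smul_mem_smul_set_iff

-- A fixed orientation contains every translate `g ^ n • a` of its element `a`, and only finitely
-- many of these miss `x`. So if infinitely many do, then `g ^ m • a = a` for some `m > 0`, and `a`
-- cannot separate the two ends of `g`.
theorem smul_ne_of_eventually_not_iff {A : Set X} (hA : A ∈ 𝓔) {g : G}
    (h : ∀ᶠ n : ℕ in Filter.atTop, ¬(g ^ n • x ∈ A ↔ g⁻¹ ^ n • x ∈ A)) (σ : dualTree h𝓔) :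
    g • σ ≠ σ := by
  intro hg
  obtain ⟨a, ha, h⟩ : ∃ a ∈ σ.1, ∀ᶠ n : ℕ in Filter.atTop,
      ¬(g ^ n • x ∈ a.side ↔ g⁻¹ ^ n • x ∈ a.side) := by
    by_cases ha : ⟨A, true⟩ ∈ σ.1
    · exact ⟨_, ha, h⟩
    · exact ⟨_, (σ.2.1.compl_mem_iff ⟨A, true⟩ hA).2 ha, by simpa [not_iff_not] using h⟩
  have hor : ∃ᶠ n : ℕ in Filter.atTop, g⁻¹ ^ n • x ∉ a.side ∨ g⁻¹⁻¹ ^ n • x ∉ a.side :=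
    (h.mono fun n hn => by rw [inv_inv]; tauto).frequently
  rcases Filter.frequently_or_distrib.1 hor with hor | hor
  · obtain ⟨m, hm, hma⟩ := exists_pow_smul_eq_of_frequently_notMem hg ha hor
    exact pow_smul_set_ne_of_eventually_not_iff hm h (congrArg SignedSet.side hma)
  · obtain ⟨m, hm, hma⟩ :=
      exists_pow_smul_eq_of_frequently_notMem (inv_smul_eq_iff.2 hg.symm) ha hor
    rw [inv_pow, inv_smul_eq_iff] at hma
    exact pow_smul_set_ne_of_eventually_not_iff hm h (congrArg SignedSet.side hma.symm)

end Action

end Dual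

/-! ### Almost invariant sets -/

section AlmostInvariant

open Filter
open scoped Pointwise

variable {G H : Type*} [Group G] [Group H] {S : Set G} {D E : Set G} {g : G}

/-- Every right translate of `E` differs from `E` by a finite set; equivalently, `E` has finite edge
boundary in the Cayley graphs of `G` with respect to finite generating sets. -/
def IsAlmostInvariant (E : Set G) : Prop :=
  ∀ g : G, ∀ᶠ x in cofinite, (x * g ∈ E ↔ x ∈ E)

theorem tendsto_mul_right_cofinite (g : G) : Tendsto (· * g) cofinite cofinite :=
  (mul_left_injective g).tendsto_cofinite

theorem tendsto_mul_pow_cofinite (hg : ¬ IsOfFinOrder g) (h : G) :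
    Tendsto (fun n : ℕ => h * g ^ n) atTop cofinite := by
  rw [← Nat.cofinite_eq_atTop]
  exact ((mul_right_injective h).comp (injective_pow_iff_not_isOfFinOrder.2 hg)).tendsto_cofinite

namespace IsAlmostInvariant

theorem compl (hE : IsAlmostInvariant E) : IsAlmostInvariant Eᶜ := fun g =>
  (hE g).mono fun _ => not_congr

theorem smul (hE : IsAlmostInvariant E) (k : G) : IsAlmostInvariant (k • E) := fun g =>
  ((mul_right_injective k⁻¹).tendsto_cofinite.eventually (hE g)).mono fun x hx => by
    simpa [Set.mem_smul_set_iff_inv_smul_mem, mul_assoc] using hx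

theorem inter (hD : IsAlmostInvariant D) (hE : IsAlmostInvariant E) :
    IsAlmostInvariant (D ∩ E) := fun g =>
  ((hD g).and (hE g)).mono fun _ h => and_congr h.1 h.2

theorem of_closure (hS : Subgroup.closure S = ⊤)
    (h : ∀ s ∈ S, ∀ᶠ x in cofinite, (x * s ∈ E ↔ x ∈ E)) : IsAlmostInvariant E := fun g => by
  induction (hS ▸ Subgroup.mem_top g : g ∈ Subgroup.closure S) using
    Subgroup.closure_induction with
  | mem s hs => exact h s hs
  | one => simp
  | mul a b _ _ ha hb =>
    filter_upwards [ha, (tendsto_mul_right_cofinite a).eventually hb] with x hxa hxb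
    rw [← mul_assoc, hxb, hxa]
  | inv a _ ha =>
    filter_upwards [(tendsto_mul_right_cofinite a⁻¹).eventually ha] with x hx
    rw [← hx, inv_mul_cancel_right]

theorem preimage {D : Set H} (hD : IsAlmostInvariant D) {p : G → H}
    (hp : Tendsto p cofinite cofinite)
    (hfin : ∀ g, (Set.range fun x => (p x)⁻¹ * p (x * g)).Finite) :
    IsAlmostInvariant (p ⁻¹' D) := fun g => by
  have hD' := (eventually_all_finite (hfin g)).2 fun r _ => hD r
  filter_upwards [hp.eventually hD'] with x hx
  simpa using hx _ (Set.mem_range_self x)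

theorem preimage_mulEquiv {D : Set H} (hD : IsAlmostInvariant D) (e : G ≃* H) :
    IsAlmostInvariant (e ⁻¹' D) :=
  hD.preimage e.injective.tendsto_cofinite fun g =>
    (Set.finite_singleton (e g)).subset (Set.range_subset_iff.2 fun x => by simp)

theorem exists_extension {F : Subgroup G} [F.FiniteIndex] {D : Set F}
    (hD : IsAlmostInvariant D) :
    ∃ E : Set G, IsAlmostInvariant E ∧ ∀ f : F, (f : G) ∈ E ↔ f ∈ D := by
  obtain ⟨T, hT, h1T⟩ := F.exists_isComplement_right 1
  have := hT.finite_right.to_subtype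
  let proj (x : G) : F := (hT.equiv x).1
  have proj_mul (f : F) (x : G) : proj (f * x) = f * proj x := by simp [proj, hT.equiv_mul_left]
  have proj_mul_snd (x : G) : (proj x : G) * (hT.equiv x).2 = x := hT.equiv_fst_mul_equiv_snd x
  refine ⟨proj ⁻¹' D, hD.preimage ?_ fun g => ?_, fun f => ?_⟩
  · refine Tendsto.cofinite_of_finite_preimage_singleton fun f => ?_
    refine (Set.finite_range fun t : T => (f : G) * t).subset fun x hx => ⟨(hT.equiv x).2, ?_⟩
    rw [← show proj x = f from hx]
    exact proj_mul_snd x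
  · refine (Set.finite_range fun t : T => proj (t * g)).subset ?_
    rintro _ ⟨x, rfl⟩
    refine ⟨(hT.equiv x).2, ?_⟩
    rw [eq_inv_mul_iff_mul_eq, ← proj_mul, ← mul_assoc, proj_mul_snd]
  · have proj_coe : proj f = f := hT.equiv_fst_eq_self_of_mem_of_one_mem h1T f.2
    rw [Set.mem_preimage, proj_coe]

theorem eventuallyConst_mul_pow (hE : IsAlmostInvariant E) (hg : ¬ IsOfFinOrder g) (h : G) :
    EventuallyConst (fun n : ℕ => h * g ^ n ∈ E) atTop := by
  obtain ⟨N, hN⟩ := eventually_atTop.1 ((tendsto_mul_pow_cofinite hg h).eventually (hE g))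
  refine eventuallyConst_atTop_nat.2 ⟨N, fun n hn => propext ?_⟩
  rw [pow_succ, ← mul_assoc]
  exact hN n hn

end IsAlmostInvariant

theorem mulCayley_preconnected (hS : Subgroup.closure S = ⊤) :
    (SimpleGraph.mulCayley S).Preconnected := by
  have hreach (g : G) (x : G) : (SimpleGraph.mulCayley S).Reachable x (x * g) := by
    induction (hS ▸ Subgroup.mem_top g : g ∈ Subgroup.closure S) using
      Subgroup.closure_induction generalizing x with
    | mem s hs =>
      by_cases hxs : x = x * s
      · rw [← hxs]
      · exact SimpleGraph.Adj.reachable ((SimpleGraph.mulCayley_adj' S _ _).2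
          ⟨hxs, s, hs, Or.inl rfl⟩)
    | one => rw [mul_one]
    | mul a b _ _ ha hb => exact mul_assoc x a b ▸ (ha x).trans (hb (x * a))
    | inv a _ ha => simpa using (ha (x * a⁻¹)).symm
  exact fun x y => by simpa using hreach (x⁻¹ * y) x

theorem isAlmostInvariant_of_finite_outBoundary (hS : Subgroup.closure S = ⊤)
    (hE : (outBoundary (SimpleGraph.mulCayley S) E).Finite) : IsAlmostInvariant E := by
  refine .of_closure hS fun s hs => ?_
  refine ((hE.image Prod.fst).union ((finite_outBoundary_compl hE).image Prod.fst)).subset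
    fun x hx => ?_
  have hx : ¬ (x * s ∈ E ↔ x ∈ E) := hx
  have hadj : (SimpleGraph.mulCayley S).Adj x (x * s) :=
    (SimpleGraph.mulCayley_adj' S _ _).2 ⟨fun h => hx (h ▸ Iff.rfl), s, hs, Or.inl rfl⟩
  by_cases hxE : x ∈ E
  · exact Or.inl ⟨(x, x * s), ⟨hadj, hxE, by tauto⟩, rfl⟩
  · exact Or.inr ⟨(x, x * s), ⟨hadj, hxE, not_not_intro (by tauto)⟩, rfl⟩

theorem IsAlmostInvariant.finite_outBoundary (hE : IsAlmostInvariant E) (hS : S.Finite) :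
    (outBoundary (SimpleGraph.mulCayley S) E).Finite := by
  have hfin (s : G) : {x | ¬ (x * s ∈ E ↔ x ∈ E)}.Finite := hE s
  refine (hS.biUnion fun s _ => ((hfin s).image fun x => (x, x * s)).union
    ((hfin s).image fun x => (x * s, x))).subset ?_
  rintro ⟨x, y⟩ ⟨hadj, hx, hy⟩
  obtain ⟨-, s, hs, rfl | rfl⟩ := (SimpleGraph.mulCayley_adj' S x y).1 hadj
  · exact Set.mem_biUnion hs (Or.inl ⟨x, fun h => hy (h.2 hx), rfl⟩)
  · exact Set.mem_biUnion hs (Or.inr ⟨y, fun h => hy (h.1 hx), rfl⟩)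

theorem finite_outBoundary_mulCayley_iff (hS : S.Finite) (hS' : Subgroup.closure S = ⊤) :
    (outBoundary (SimpleGraph.mulCayley S) E).Finite ↔ IsAlmostInvariant E :=
  ⟨isAlmostInvariant_of_finite_outBoundary hS', fun hE => hE.finite_outBoundary hS⟩

theorem exists_finite_forall_mulCayley_adj (hS : S.Finite) : ∃ D : Set (G × G), D.Finite ∧
    ∀ x y, (SimpleGraph.mulCayley S).Adj x y → ∃ g : G, g • (x, y) ∈ D := by
  refine ⟨(fun s => (1, s)) '' S ∪ (fun s => (s, 1)) '' S, (hS.image _).union (hS.image _),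
    fun x y hadj => ?_⟩
  obtain ⟨-, s, hs, rfl | rfl⟩ := (SimpleGraph.mulCayley_adj' S _ _).1 hadj
  · exact ⟨x⁻¹, Or.inl ⟨s, hs, by simp⟩⟩
  · exact ⟨y⁻¹, Or.inr ⟨s, hs, by simp⟩⟩

end AlmostInvariant

/-! ### Cuts separating the ends of a line -/

section EndCuts

open Filter
open scoped Pointwise

variable {G H : Type*} [Group G] [Group H] {E : Set G} {g h : G}

/-- The almost invariant sets separating the two ends of the line `n ↦ h * g ^ n`. -/
def endCuts (h g : G) : Set (Set G) :=
  {E | IsAlmostInvariant E ∧ ∀ᶠ n : ℕ in atTop, ¬ (h * g ^ n ∈ E ↔ h * g⁻¹ ^ n ∈ E)}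

theorem smul_endCuts (k h g : G) : k • endCuts h g = endCuts (k * h) g := by
  ext E
  have hmem (x : G) : x ∈ k⁻¹ • E ↔ k * x ∈ E := by simp [Set.mem_smul_set_iff_inv_smul_mem]
  rw [Set.mem_smul_set_iff_inv_smul_mem]
  simp only [endCuts, Set.mem_ofPred_eq, hmem, mul_assoc]
  exact and_congr_left' ⟨fun hE => by simpa using hE.smul k, fun hE => hE.smul _⟩

theorem preimage_mem_endCuts_of_mulEquiv (e : G ≃* H) {D : Set H}
    (hD : D ∈ endCuts (e h) (e g)) : e ⁻¹' D ∈ endCuts h g :=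
  ⟨hD.1.preimage_mulEquiv e, by simpa using hD.2⟩

theorem IsAlmostInvariant.exists_eventually_iff (hE : IsAlmostInvariant E)
    (hg : ¬ IsOfFinOrder g) (h : G) :
    ∃ P Q : Prop, ∀ᶠ n : ℕ in atTop, (h * g ^ n ∈ E ↔ P) ∧ (h * g⁻¹ ^ n ∈ E ↔ Q) := by
  obtain ⟨P, hP⟩ := eventuallyConst_iff_exists_eventuallyEq.1 (hE.eventuallyConst_mul_pow hg h)
  obtain ⟨Q, hQ⟩ := eventuallyConst_iff_exists_eventuallyEq.1
    (hE.eventuallyConst_mul_pow (mt isOfFinOrder_inv_iff.1 hg) h)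
  exact ⟨P, Q, (hP.and hQ).mono fun n hn => hn.imp Eq.to_iff Eq.to_iff⟩

theorem mem_endCuts_iff {P Q : Prop} (hE : IsAlmostInvariant E)
    (hPQ : ∀ᶠ n : ℕ in atTop, (h * g ^ n ∈ E ↔ P) ∧ (h * g⁻¹ ^ n ∈ E ↔ Q)) :
    E ∈ endCuts h g ↔ ¬ (P ↔ Q) := by
  have hiff : ∀ᶠ n : ℕ in atTop, ¬ (h * g ^ n ∈ E ↔ h * g⁻¹ ^ n ∈ E) ↔ ¬ (P ↔ Q) :=
    hPQ.mono fun n hn => not_congr (iff_congr hn.1 hn.2)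
  refine ⟨fun hmem => ?_, fun hne => ⟨hE, hiff.mono fun n hn => hn.2 hne⟩⟩
  obtain ⟨n, hn, hn'⟩ := (hmem.2.and hiff).exists
  exact hn'.1 hn

theorem mem_endCuts_of_pow (hg : ¬ IsOfFinOrder g) {j : ℕ} (hj : 0 < j)
    (hE : E ∈ endCuts h (g ^ j)) : E ∈ endCuts h g := by
  obtain ⟨P, Q, hPQ⟩ := hE.1.exists_eventually_iff hg h
  have hmul : Tendsto (fun n => j * n) atTop atTop := tendsto_id.const_mul_atTop' hj
  have hPQ' : ∀ᶠ n : ℕ in atTop, (h * (g ^ j) ^ n ∈ E ↔ P) ∧ (h * (g ^ j)⁻¹ ^ n ∈ E ↔ Q) := by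
    simpa only [pow_mul, inv_pow] using hmul.eventually hPQ
  exact (mem_endCuts_iff hE.1 hPQ).2 ((mem_endCuts_iff hE.1 hPQ').1 hE)

theorem isCutClass_endCuts {S : Set G} (hS : S.Finite) (hS' : Subgroup.closure S = ⊤)
    (hg : ¬ IsOfFinOrder g) (h : G) : IsCutClass (SimpleGraph.mulCayley S) (endCuts h g) where
  finite_outBoundary _ hE := (finite_outBoundary_mulCayley_iff hS hS').2 hE.1
  compl_mem _ hE := ⟨hE.1.compl, hE.2.mono fun _ => mt not_iff_not.1⟩
  nonempty E hE := by
    obtain ⟨n, hn⟩ := hE.2.exists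
    exact Set.nonempty_iff_ne_empty.2 fun hempty => hn (by simp [hempty])
  inter_mem_or C hC D hD := by
    have hD := (finite_outBoundary_mulCayley_iff hS hS').1 hD
    obtain ⟨C₁, C₂, hC'⟩ := hC.1.exists_eventually_iff hg h
    obtain ⟨D₁, D₂, hD'⟩ := hD.exists_eventually_iff hg h
    have hsep := (mem_endCuts_iff hC.1 hC').1 hC
    rw [mem_endCuts_iff (P := C₁ ∧ D₁) (Q := C₂ ∧ D₂) (hC.1.inter hD)
        ((hC'.and hD').mono fun _ hn => ⟨and_congr hn.1.1 hn.2.1, and_congr hn.1.2 hn.2.2⟩),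
      mem_endCuts_iff (P := C₁ ∧ ¬ D₁) (Q := C₂ ∧ ¬ D₂) (hC.1.inter hD.compl)
        ((hC'.and hD').mono fun _ hn => ⟨and_congr hn.1.1 (not_congr hn.2.1),
          and_congr hn.1.2 (not_congr hn.2.2)⟩)]
    tauto

end EndCuts

/-! ### Cuts of free groups and virtually free groups -/

section FreeGroupCuts

open Filter FreeGroup

variable {α : Type*} [DecidableEq α] {s c : α × Bool} {f x : FreeGroup α} {R : List (α × Bool)}

theorem mem_startsWith_iff : x ∈ startsWith s ↔ x.toWord.head? = some s := by
  rw [List.head?_eq_getElem?]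
  rfl

theorem head?_toWord_mul_mk_singleton (hx : x ≠ 1) (hx' : x ≠ mk [(c.1, !c.2)]) :
    (x * mk [c]).toWord.head? = x.toWord.head? := by
  obtain ⟨L, d, hL⟩ : ∃ L d, x.toWord = L ++ [d] :=
    ⟨_, _, (List.dropLast_append_getLast (toWord_eq_nil_iff.not.2 hx)).symm⟩
  have hred : IsReduced (L ++ [d]) := hL ▸ isReduced_toWord
  have hxL : x = mk (L ++ [d]) := by rw [← hL, mk_toWord]
  by_cases hdc : d.1 = c.1 → d.2 = c.2
  · have hred' : IsReduced (L ++ [d] ++ [c]) :=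
      hred.append_overlap (by simpa [FreeGroup.IsReduced] using hdc) (by simp)
    rw [hL, hxL, mul_mk, toWord_mk, hred'.reduce_eq, List.head?_append, List.head?_append]
    simp
  · obtain rfl : d = (c.1, !c.2) := by
      obtain ⟨h₁, h₂⟩ := Classical.not_imp.1 hdc
      exact Prod.ext h₁ (Bool.eq_not_iff.2 h₂)
    have hL_ne : L ≠ [] := by
      rintro rfl
      exact hx' hxL
    have hcancel : x * mk [c] = mk L := by
      rw [hxL, ← mul_mk, mul_assoc, show (mk [(c.1, !c.2)] : FreeGroup α) = (mk [c])⁻¹ from rfl,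
        inv_mul_cancel, mul_one]
    rw [hcancel, hL, toWord_mk, IsReduced.reduce_eq (List.IsChain.left_of_append hred),
      List.head?_append_of_ne_nil _ hL_ne]

theorem isAlmostInvariant_startsWith (s : α × Bool) : IsAlmostInvariant (startsWith s) := by
  refine .of_closure (FreeGroup.closure_range_of α) (Set.forall_mem_range.2 fun a => ?_)
  filter_upwards [eventually_cofinite_ne 1, eventually_cofinite_ne (mk [(a, false)])] with x hx hx'
  rw [mem_startsWith_iff, mem_startsWith_iff,
    ← head?_toWord_mul_mk_singleton (c := (a, true)) hx hx']
  rfl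

theorem toWord_mk_pow (hR : IsCyclicallyReduced R) (n : ℕ) :
    (mk R ^ n).toWord = (List.replicate n R).flatten := by
  rw [toWord_pow, toWord_mk, hR.isReduced.reduce_eq, (hR.flatten_replicate n).isReduced.reduce_eq]

theorem mk_pow_mem_startsWith (hR : IsCyclicallyReduced R) (hs : R.head? = some s) {n : ℕ}
    (hn : n ≠ 0) : mk R ^ n ∈ startsWith s := by
  rw [mem_startsWith_iff, toWord_mk_pow hR, List.head?_flatten_replicate hn, hs]

theorem mk_inv_pow_notMem_startsWith (hR : IsCyclicallyReduced R) (hs : R.head? = some s) {n : ℕ}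
    (hn : n ≠ 0) : (mk R)⁻¹ ^ n ∉ startsWith s := by
  rw [mem_startsWith_iff, inv_pow, toWord_inv, invRev, List.head?_reverse, List.getLast?_map,
    toWord_mk_pow hR, List.getLast?_flatten_replicate hn, Option.map_eq_some_iff]
  rintro ⟨t, ht, rfl⟩
  simpa using hR.2 t ht _ hs

theorem exists_startsWith_mem_endCuts (hf : f ≠ 1) : ∃ u s, startsWith s ∈ endCuts u f := by
  set u := mk (reduceCyclically.conjugator f.toWord)
  set R := reduceCyclically f.toWord
  have hR : IsCyclicallyReduced R := reduceCyclically.isCyclicallyReduced isReduced_toWord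
  have hconj : u * mk R * u⁻¹ = f := by
    rw [inv_mk, mul_mk, mul_mk, reduceCyclically.conj_conjugator_reduceCyclically, mk_toWord]
  have hR_ne : R ≠ [] := fun h => hf (by rw [← hconj, h, ← one_eq_mk, mul_one, mul_inv_cancel])
  have hpow (n : ℕ) : u⁻¹ * f ^ n * u = mk R ^ n := by
    rw [← hconj, conj_pow]
    group
  have hpow_inv (n : ℕ) : u⁻¹ * f⁻¹ ^ n * u = (mk R)⁻¹ ^ n := by
    rw [← hconj, conj_inv, conj_pow]
    group
  have hai := isAlmostInvariant_startsWith (R.head hR_ne)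
  have hord : ¬ IsOfFinOrder f := not_isOfFinOrder_of_isMulTorsionFree hf
  refine ⟨u⁻¹, R.head hR_ne, hai, ?_⟩
  filter_upwards [(tendsto_mul_pow_cofinite hord u⁻¹).eventually (hai u),
    (tendsto_mul_pow_cofinite (mt isOfFinOrder_inv_iff.1 hord) u⁻¹).eventually (hai u),
    eventually_ne_atTop 0] with n hn hn_inv hn0
  rw [← hn, ← hn_inv, hpow, hpow_inv]
  have hhead := List.head?_eq_some_head hR_ne
  exact fun h => mk_inv_pow_notMem_startsWith hR hhead hn0
    (h.1 (mk_pow_mem_startsWith hR hhead hn0))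

theorem finite_of_fg_freeGroup (α : Type*) [Group.FG (FreeGroup α)] : Finite α := by
  have : Group.FG (Abelianization (FreeGroup α)) := QuotientGroup.fg _
  have : Module.Finite ℤ (FreeAbelianGroup α) :=
    Module.Finite.iff_addGroup_fg.2
      (inferInstanceAs (AddGroup.FG (Additive (Abelianization (FreeGroup α)))))
  exact Module.Finite.finite_basis (FreeAbelianGroup.basis α)

end FreeGroupCuts

section VirtuallyFree

open scoped Pointwise

universe u

variable {G : Type*} [Group G]

theorem eq_one_of_isOfFinOrder_of_isFreeGroup {F : Type*} [Group F] [IsFreeGroup F] {f : F}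
    (hf : IsOfFinOrder f) : f = 1 := by
  let e := IsFreeGroup.toFreeGroup F
  by_contra hne
  exact not_isOfFinOrder_of_isMulTorsionFree ((map_ne_one_iff e e.injective).2 hne)
    (e.toMonoidHom.isOfFinOrder hf)

/-- The families of cuts separating the ends of the lines in `G`. -/
def endCutClasses (G : Type*) [Group G] : Set (Set (Set G)) :=
  {𝒮 | ∃ h g : G, ¬ IsOfFinOrder g ∧ endCuts h g = 𝒮}

namespace VirtuallyFree

theorem exists_finite_forall_mem_endCuts [Group.FG G] (hG : VirtuallyFree G) :
    ∃ 𝓓 : Set (Set G), 𝓓.Finite ∧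
      ∀ g : G, ¬ IsOfFinOrder g → ∃ D ∈ 𝓓, ∃ u, D ∈ endCuts u g := by
  classical
  obtain ⟨F, hF, ⟨_⟩⟩ := hG
  have hF_fg : Group.FG F := Subgroup.fg_of_index_ne_zero F
  let e := IsFreeGroup.toFreeGroup F
  have : Group.FG (FreeGroup (IsFreeGroup.Generators F)) :=
    Group.fg_of_surjective (f := e.toMonoidHom) e.surjective
  have := finite_of_fg_freeGroup (IsFreeGroup.Generators F)
  choose D hD hDF using fun s =>
    ((isAlmostInvariant_startsWith s).preimage_mulEquiv e).exists_extension
  refine ⟨Set.range D, Set.finite_range D, fun g hg => ?_⟩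
  obtain ⟨j, hj, -, hjF⟩ := Subgroup.exists_pow_mem_of_index_ne_zero hF.index_ne_zero g
  have hne : e ⟨g ^ j, hjF⟩ ≠ 1 := by
    rw [Ne, map_eq_one_iff e e.injective, Subgroup.mk_eq_one]
    exact fun h => hg (isOfFinOrder_iff_pow_eq_one.2 ⟨j, hj, h⟩)
  obtain ⟨u, s, hs⟩ := exists_startsWith_mem_endCuts hne
  have hs' : e ⁻¹' FreeGroup.startsWith s ∈ endCuts (e.symm u) ⟨g ^ j, hjF⟩ :=
    preimage_mem_endCuts_of_mulEquiv e (by rwa [e.apply_symm_apply])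
  refine ⟨D s, ⟨s, rfl⟩, e.symm u, mem_endCuts_of_pow hg hj ⟨hD s, hs'.2.mono fun n hn => ?_⟩⟩
  simpa [← hDF s] using hn

theorem exists_isCutSystem [Group.FG G] (hG : VirtuallyFree G) {S : Set G} (hS : S.Finite)
    (hS' : Subgroup.closure S = ⊤) :
    ∃ K, IsCutSystem (SimpleGraph.mulCayley S) (endCutClasses G) K := by
  obtain ⟨𝓓, h𝓓, hcut⟩ := hG.exists_finite_forall_mem_endCuts
  obtain ⟨K, hK⟩ :=
    (h𝓓.image fun D => (outBoundary (SimpleGraph.mulCayley S) D).ncard).bddAbove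
  refine ⟨K, mulCayley_preconnected hS', ?_, ?_⟩
  · rintro _ ⟨h, g, hg, rfl⟩
    exact isCutClass_endCuts hS hS' hg h
  · rintro _ ⟨h, g, hg, rfl⟩
    obtain ⟨D, hD, u, hDu⟩ := hcut g hg
    refine ⟨(h * u⁻¹) • D, ?_, ?_⟩
    · simpa [smul_endCuts] using Set.smul_mem_smul_set (a := h * u⁻¹) hDu
    · rw [ncard_outBoundary_smul fun _ _ _ => SimpleGraph.mulCayley_adj_mul_iff_right]
      exact hK ⟨D, hD, rfl⟩

theorem finite_of_forall_isOfFinOrder (hG : VirtuallyFree G) {H : Subgroup G}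
    (hH : ∀ h ∈ H, IsOfFinOrder h) : Finite H := by
  obtain ⟨F, hF, ⟨_⟩⟩ := hG
  have hbot : F.subgroupOf H = ⊥ := by
    refine (Subgroup.eq_bot_iff_forall _).2 fun h hhF => Subtype.ext ?_
    have hord : IsOfFinOrder (⟨h, hhF⟩ : F) := Submonoid.isOfFinOrder_coe.1 (hH h h.2)
    exact congrArg ((↑) : F → G) (eq_one_of_isOfFinOrder_of_isFreeGroup hord)
  refine Nat.finite_of_card_ne_zero ?_
  rw [← Subgroup.index_bot, ← hbot]
  exact Subgroup.FiniteIndex.index_ne_zero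

theorem exists_isHalfTreeAction {G : Type u} [Group G] [Group.FG G] (hG : VirtuallyFree G) :
    ∃ (V : Type u) (_ : MulAction G V) (𝓗 : Set (Set V)), Nonempty V ∧ IsHalfTreeAction G 𝓗 ∧
      (Quotient.mk (MulAction.orbitRel G (Set V)) '' 𝓗).Finite ∧
      ∀ x : V, Finite (MulAction.stabilizer G x) := by
  obtain ⟨S, hS⟩ := Group.fg_def.1 ‹Group.FG G›
  obtain ⟨K, hK⟩ := hG.exists_isCutSystem S.finite_toSet hS
  obtain ⟨𝓔, hnest, h𝓔, hsep⟩ := hK.exists_isNestedFamily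
    (fun _ _ _ => SimpleGraph.mulCayley_adj_mul_iff_right) (by
      rintro k _ ⟨h, g, hg, rfl⟩
      exact ⟨k * h, g, hg, (smul_endCuts k h g).symm⟩)
  obtain ⟨D, hD, hadj⟩ := exists_finite_forall_mulCayley_adj S.finite_toSet
  refine ⟨dualTree h𝓔, inferInstance, dualHalfTrees h𝓔, nonempty_dualTree hnest,
    isHalfTreeAction_dualHalfTrees hnest,
    finite_orbits_dualHalfTrees hnest (mulCayley_preconnected hS) hD hadj,
    fun σ => hG.finite_of_forall_isOfFinOrder fun g hgσ => ?_⟩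
  by_contra hg
  obtain ⟨A, hA, hAg⟩ := hsep _ ⟨1, g, hg, rfl⟩
  refine smul_ne_of_eventually_not_iff (x := (1 : G)) hA ?_ σ hgσ
  simpa only [smul_eq_mul, one_mul, mul_one] using hAg.2

theorem surjective_of_homEquiv_id [Group.FG G] (hG : VirtuallyFree G) (hco : CoHopfian G)
    {ψ : G →* G} (hψ : HomEquiv ψ (MonoidHom.id G)) : Function.Surjective ψ := by
  obtain ⟨V, _, 𝓗, _, h𝓗, hfin, hst⟩ := hG.exists_isHalfTreeAction
  refine h𝓗.surjective_of_conj_on_stabilizer hco hfin hst fun x => ?_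
  obtain ⟨g, hg⟩ := hψ (MulAction.stabilizer G x) (Set.finite_coe_iff.1 (hst x))
  refine ⟨g⁻¹, fun h hh => ?_⟩
  have hconj : h = g * ψ h * g⁻¹ := hg h hh
  nth_rw 2 [hconj]
  group

theorem injective_of_surjective [Group.FG G] (hG : VirtuallyFree G) {ψ : G →* G}
    (hψ : Function.Surjective ψ) : Function.Injective ψ :=
  have := hG.residuallyFinite
  injective_of_surjective_of_residuallyFinite hψ

end VirtuallyFree

end VirtuallyFree

/-- Every class-permuting endomorphism of a finitely generated co-Hopfian
virtually free group is an automorphism. -/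
theorem classPermuting_bijective_of_coHopfian
    (G : Type*) [Group G] (hfg : Group.FG G) (hvf : VirtuallyFree G)
    (hco : CoHopfian G) :
    ∀ φ : G →* G, ClassPermuting φ → Function.Bijective φ := by
  rintro φ ⟨n, hn, hequiv⟩
  have hsurj_pow : Function.Surjective (homPow φ n) := hvf.surjective_of_homEquiv_id hco hequiv
  obtain ⟨m, rfl⟩ := Nat.exists_eq_succ_of_ne_zero (Nat.one_le_iff_ne_zero.1 hn)
  have hsurj : Function.Surjective φ := Function.Surjective.of_comp hsurj_pow
  exact ⟨hvf.injective_of_surjective hsurj, hsurj⟩
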